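/- arXiv:1512.03531 — 8 statements merged into one kernel-verified Lean document; each statement's English description precedes it below -/
import Mathlib

section
/- Let F′ be a field and d a positive integer. Define d₁ as follows: if char(F′) = 0 then d₁ = d; if char(F′) = p > 0 then d₁ is the p-free part of d, i.e., d = d₁ p^s with p ∤ d₁ and s ∈ ℕ. Assume F′ contains a primitive d₁-th root of unity. Then the rational function field F′(X) admits a field extension L such that L/F′(X) is Galois of degree d with cyclic Galois group. -/
/-!
Adjoining a `d₁`-th root of `X` to `F′(X)` gives a cyclic extension of degree `d₁` by Kummer theory.
In characteristic `p`, the degree of a cyclic extension `L/K` with generator `σ` is then multiplied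
by `p` repeatedly, following Albert. Choose `b ∈ L` of trace `1`. The element `b ^ p - b` has trace
`1 ^ p - 1 = 0`, so it equals `σ a - a` for some `a` by the additive Hilbert 90, and `σ` extends to
`L(θ)`, where `θ ^ p - θ = a`, by `θ ↦ θ + b`. The `[L : K]`-th power of this extension fixes `L`
and sends `θ` to `θ + Tr b = θ + 1`, so it has order `p`. Here `a` may be changed by any element of
`K`; as `x ^ p - x = X` has no solution in `F′(X)`, this freedom suffices to make `θ` of degree `p`
over `L`.
-/

open Polynomial Module

universe u

/-- `K` has a cyclic Galois extension of degree `n`, required to lie in the universe of `K`. This is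
meant for `n ≠ 0`, since `finrank` is `0` on infinite extensions. -/
def HasCyclicExtension (K : Type u) [Field K] (n : ℕ) : Prop :=
  ∃ (L : Type u) (_ : Field L) (_ : Algebra K L),
    IsGalois K L ∧ finrank K L = n ∧ IsCyclic (L ≃ₐ[K] L)

theorem exists_eq_add_natCast_of_pow_sub_self_eq {L : Type*} [Field L] {p : ℕ} [Fact p.Prime]
    [CharP L p] {x y : L} (h : y ^ p - y = x ^ p - x) : ∃ k : ℕ, y = x + k := by
  have hfixed : (y - x) ^ p = y - x := by
    rw [sub_pow_char]
    linear_combination h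
  rw [← Subfield.mem_bot_iff_pow_eq_self, ← ZMod.fieldRange_castHom_eq_bot p] at hfixed
  obtain ⟨z, hz⟩ := hfixed
  refine ⟨z.val, ?_⟩
  rw [← map_natCast (ZMod.castHom dvd_rfl L), ZMod.natCast_zmod_val, hz, add_sub_cancel]

section CommRing

variable {R : Type*} [CommRing R] {p : ℕ}

theorem monic_X_pow_sub_X_sub_C [Nontrivial R] (hp : 1 < p) (a : R) :
    (X ^ p - X - C a : R[X]).Monic := by
  rw [sub_sub]
  exact monic_X_pow_sub ((degree_X_add_C a).trans_lt (mod_cast hp))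

theorem natDegree_X_pow_sub_X_sub_C [Nontrivial R] (hp : 1 < p) (a : R) :
    (X ^ p - X - C a : R[X]).natDegree = p := by
  rw [sub_sub, natDegree_sub_eq_left_of_natDegree_lt] <;> simp [hp]

theorem separable_X_pow_sub_X_sub_C [CharP R p] (a : R) : (X ^ p - X - C a : R[X]).Separable := by
  have hderiv : derivative (X ^ p - X - C a : R[X]) = -1 := by simp [derivative_X_pow]
  rw [separable_def, hderiv]
  exact isCoprime_one_right.neg_right

end CommRing

section ConjRoot

variable {K S : Type*} [Field K] [CommRing S] [Algebra K S] {x : S} {r : K}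

theorem isConjRoot_add_nsmul (h : IsConjRoot K x (x + algebraMap K S r)) (n : ℕ) :
    IsConjRoot K x (x + n • algebraMap K S r) := by
  induction n with
  | zero => simpa using IsConjRoot.refl
  | succ n ih =>
    refine ih.trans ?_
    simpa [add_mul, add_assoc, add_comm, add_left_comm] using h.add_algebraMap (n • r)

theorem le_natDegree_minpoly_of_isConjRoot_add [IsDomain S] (p : ℕ) [CharP K p]
    (hx : IsIntegral K x) (hr : r ≠ 0) (h : IsConjRoot K x (x + algebraMap K S r)) :
    p ≤ (minpoly K x).natDegree := by
  classical
  have hinj : Set.InjOn (fun j : ℕ ↦ x + j • algebraMap K S r) (Finset.range p) := by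
    intro i hi j hj hij
    have hmul : i • r = j • r := (algebraMap K S).injective (by simpa using hij)
    rw [nsmul_eq_mul, nsmul_eq_mul] at hmul
    exact CharP.natCast_injOn_Iio K p (by simpa using hi) (by simpa using hj)
      (mul_right_cancel₀ hr hmul)
  have hroots : (Finset.range p).image (fun j : ℕ ↦ x + j • algebraMap K S r) ⊆
      ((minpoly K x).aroots S).toFinset := by
    intro y hy
    obtain ⟨j, -, rfl⟩ := Finset.mem_image.1 hy
    rw [Multiset.mem_toFinset, mem_aroots]
    exact ⟨minpoly.ne_zero hx, (isConjRoot_add_nsmul h j).aeval_eq_zero⟩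
  calc p = ((Finset.range p).image fun j : ℕ ↦ x + j • algebraMap K S r).card := by
        rw [Finset.card_image_of_injOn hinj, Finset.card_range]
    _ ≤ ((minpoly K x).aroots S).toFinset.card := Finset.card_le_card hroots
    _ ≤ Multiset.card ((minpoly K x).aroots S) := Multiset.toFinset_card_le _
    _ ≤ ((minpoly K x).map (algebraMap K S)).natDegree := card_roots' _
    _ ≤ (minpoly K x).natDegree := natDegree_map_le

end ConjRoot

theorem irreducible_X_pow_sub_X_sub_C {K : Type*} [Field K] {p : ℕ} [hp : Fact p.Prime]
    [CharP K p] {a : K} (ha : ∀ x : K, x ^ p - x ≠ a) : Irreducible (X ^ p - X - C a : K[X]) := by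
  let Ω := AlgebraicClosure K
  have : CharP Ω p := charP_of_injective_algebraMap (algebraMap K Ω).injective p
  have hmonic := monic_X_pow_sub_X_sub_C hp.out.one_lt a
  have hdeg := natDegree_X_pow_sub_X_sub_C hp.out.one_lt a
  obtain ⟨θ, hθ⟩ := IsAlgClosed.exists_aeval_eq_zero Ω (X ^ p - X - C a : K[X])
    (degree_ne_of_natDegree_ne (hdeg ▸ hp.out.ne_zero))
  have hint : IsIntegral K θ := ⟨_, hmonic, hθ⟩
  have hdvd := minpoly.dvd K θ hθ
  have hroot {x : Ω} (hx : IsConjRoot K θ x) : x ^ p - x = algebraMap K Ω a := by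
    simpa [sub_eq_zero] using aeval_eq_zero_of_dvd_aeval_eq_zero hdvd hx.aeval_eq_zero
  have hnotMem : θ ∉ (algebraMap K Ω).range := by
    rintro ⟨x, rfl⟩
    exact ha x ((algebraMap K Ω).injective (by simpa using hroot IsConjRoot.refl))
  obtain ⟨θ', hne, hconj⟩ := (notMem_iff_exists_ne_and_isConjRoot
    ((separable_X_pow_sub_X_sub_C a).of_dvd hdvd) (IsAlgClosed.splits _)).1 hnotMem
  obtain ⟨k, rfl⟩ := exists_eq_add_natCast_of_pow_sub_self_eq
    ((hroot hconj).trans (hroot IsConjRoot.refl).symm)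
  have hk : (k : K) ≠ 0 := fun hk ↦ hne (by simp [← map_natCast (algebraMap K Ω), hk])
  have hle : p ≤ (minpoly K θ).natDegree :=
    le_natDegree_minpoly_of_isConjRoot_add p hint hk (by simpa using hconj)
  rw [eq_of_monic_of_dvd_of_natDegree_le (minpoly.monic hint) hmonic hdvd (hdeg.trans_le hle)]
  exact minpoly.irreducible hint

section GaloisTrace

variable {K L : Type*} [Field K] [Field L] [Algebra K L] [FiniteDimensional K L] [IsGalois K L]

theorem trace_pow_char (p : ℕ) [Fact p.Prime] [CharP K p] (x : L) :
    Algebra.trace K L (x ^ p) = Algebra.trace K L x ^ p := by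
  have : CharP L p := charP_of_injective_algebraMap (algebraMap K L).injective p
  apply (algebraMap K L).injective
  simp only [map_pow, trace_eq_sum_automorphisms, sum_pow_char]

variable {σ : Gal(L/K)}

theorem trace_eq_sum_range_pow_of_generator (hσ : ∀ τ, τ ∈ Subgroup.zpowers σ) (x : L) :
    algebraMap K L (Algebra.trace K L x) = ∑ i ∈ Finset.range (finrank K L), (σ ^ i) x := by
  classical
  rw [trace_eq_sum_automorphisms, ← IsGalois.card_aut_eq_finrank,
    ← orderOf_eq_card_of_forall_mem_zpowers hσ, ← IsCyclic.image_range_orderOf hσ,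
    Finset.sum_image]
  exact fun i hi j hj h ↦ pow_injOn_Iio_orderOf (by simpa using hi) (by simpa using hj) h

theorem mem_range_algebraMap_of_generator_apply_eq (hσ : ∀ τ, τ ∈ Subgroup.zpowers σ) {x : L}
    (hx : σ x = x) : x ∈ Set.range (algebraMap K L) := by
  rw [IsGalois.mem_range_algebraMap_iff_fixed]
  have hle : Subgroup.zpowers σ ≤ MulAction.stabilizer Gal(L/K) x := Subgroup.zpowers_le.2 hx
  exact fun τ ↦ hle (hσ τ)

-- The image of `σ - 1` lies in the kernel of the trace, and both have dimension `[L : K] - 1`.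
theorem exists_sub_eq_of_trace_eq_zero (hσ : ∀ τ, τ ∈ Subgroup.zpowers σ) {x : L}
    (hx : Algebra.trace K L x = 0) : ∃ y : L, σ y - y = x := by
  let δ : L →ₗ[K] L := σ.toLinearMap - LinearMap.id
  have hker : LinearMap.ker δ ≤ LinearMap.range (Algebra.linearMap K L) := fun y hy ↦
    mem_range_algebraMap_of_generator_apply_eq hσ (sub_eq_zero.1 (by simpa [δ] using hy))
  have hrange : LinearMap.range δ ≤ LinearMap.ker (Algebra.trace K L) := by
    rintro _ ⟨y, rfl⟩
    simp [δ, Algebra.trace_eq_of_algEquiv]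
  have hker_finrank : finrank K (LinearMap.ker δ) ≤ 1 := by
    simpa [LinearMap.finrank_range_of_inj (f := Algebra.linearMap K L) (algebraMap K L).injective]
      using Submodule.finrank_mono hker
  have htrace_finrank := LinearMap.finrank_range_add_finrank_ker (Algebra.trace K L)
  rw [LinearMap.range_eq_top.2 (Algebra.trace_surjective K L), finrank_top, finrank_self]
    at htrace_finrank
  have hδ_finrank := LinearMap.finrank_range_add_finrank_ker δ
  have heq : LinearMap.range δ = LinearMap.ker (Algebra.trace K L) :=
    Submodule.eq_of_le_of_finrank_le hrange (by omega)
  obtain ⟨y, hy⟩ : x ∈ LinearMap.range δ := heq ▸ hx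
  exact ⟨y, by simpa [δ] using hy⟩

end GaloisTrace

section AlbertElement

variable {K L : Type*} [Field K] [Field L] [Algebra K L] {p : ℕ} [Fact p.Prime] [CharP K p]
  {σ : Gal(L/K)}

theorem exists_apply_eq_add_natCast_of_sub_eq_pow_sub_self {x b : L}
    (h : σ (x ^ p - x) - (x ^ p - x) = b ^ p - b) :
    ∃ k : ℕ, σ x = x + b + k ∧ Algebra.trace K L b + finrank K L * k = 0 := by
  have : CharP L p := charP_of_injective_algebraMap (algebraMap K L).injective p
  obtain ⟨k, hk⟩ : ∃ k : ℕ, σ x = x + b + k := by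
    refine exists_eq_add_natCast_of_pow_sub_self_eq (p := p) ?_
    rw [map_sub, map_pow] at h
    rw [add_pow_char]
    linear_combination h
  refine ⟨k, hk, ?_⟩
  have htrace := congrArg (Algebra.trace K L) hk
  rw [Algebra.trace_eq_of_algEquiv, map_add, map_add, ← map_natCast (algebraMap K L),
    Algebra.trace_algebraMap, nsmul_eq_mul] at htrace
  linear_combination -htrace

variable [FiniteDimensional K L] [IsGalois K L]

theorem exists_trace_eq_one_and_sub_eq_pow_sub_self (hσ : ∀ τ, τ ∈ Subgroup.zpowers σ) :
    ∃ a b : L, Algebra.trace K L b = 1 ∧ σ a - a = b ^ p - b := by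
  obtain ⟨b, hb⟩ := Algebra.trace_surjective K L 1
  obtain ⟨a, ha⟩ := exists_sub_eq_of_trace_eq_zero hσ (x := b ^ p - b)
    (by rw [map_sub, trace_pow_char, hb, one_pow, sub_self])
  exact ⟨a, b, hb, ha⟩

theorem exists_pow_sub_self_eq_of_finrank_ne_zero
    (hσ : ∀ τ, τ ∈ Subgroup.zpowers σ) (hn : (finrank K L : K) ≠ 0) {c : K} {x : L}
    (hx : x ^ p - x = algebraMap K L c) : ∃ z : K, z ^ p - z = c := by
  obtain ⟨k, hσx, hk⟩ := exists_apply_eq_add_natCast_of_sub_eq_pow_sub_self (σ := σ) (p := p)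
    (x := x) (b := 0) (by simp [hx, (Fact.out : p.Prime).ne_zero])
  have hk0 : (k : L) = 0 := by
    rw [← map_natCast (algebraMap K L), (by simpa [hn] using hk : (k : K) = 0), map_zero]
  obtain ⟨z, rfl⟩ := mem_range_algebraMap_of_generator_apply_eq hσ (by simpa [hk0] using hσx)
  exact ⟨z, (algebraMap K L).injective (by simpa using hx)⟩

-- If `a` is of the form `x ^ p - x`, then `p ∤ [L : K]`, and `a` can be replaced by `a + c`.
theorem exists_trace_eq_one_and_forall_pow_sub_self_ne
    (hσ : ∀ τ, τ ∈ Subgroup.zpowers σ) {c : K} (hc : ∀ z : K, z ^ p - z ≠ c) :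
    ∃ a b : L, Algebra.trace K L b = 1 ∧ σ a - a = b ^ p - b ∧ ∀ x : L, x ^ p - x ≠ a := by
  have : CharP L p := charP_of_injective_algebraMap (algebraMap K L).injective p
  obtain ⟨a, b, hb, hab⟩ := exists_trace_eq_one_and_sub_eq_pow_sub_self (p := p) hσ
  by_cases ha : ∀ x : L, x ^ p - x ≠ a
  · exact ⟨a, b, hb, hab, ha⟩
  push Not at ha
  obtain ⟨x, rfl⟩ := ha
  have hn : (finrank K L : K) ≠ 0 := by
    obtain ⟨k, -, hk⟩ := exists_apply_eq_add_natCast_of_sub_eq_pow_sub_self hab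
    intro hn
    simp [hb, hn] at hk
  refine ⟨x ^ p - x + algebraMap K L c, b, hb, ?_, fun y hy ↦ ?_⟩
  · rw [map_add, AlgEquiv.commutes]
    linear_combination hab
  · obtain ⟨z, hz⟩ := exists_pow_sub_self_eq_of_finrank_ne_zero hσ hn (x := y - x) (c := c) (by
      rw [sub_pow_char]
      linear_combination hy)
    exact hc z hz

end AlbertElement

theorem isGalois_and_isCyclic_of_finrank_dvd_orderOf {K L : Type*} [Field K] [Field L]
    [Algebra K L] [FiniteDimensional K L] {σ : Gal(L/K)} (h : finrank K L ∣ orderOf σ) :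
    IsGalois K L ∧ IsCyclic Gal(L/K) := by
  have hcard : Nat.card Gal(L/K) ≤ finrank K L :=
    Nat.card_eq_fintype_card.trans_le AlgEquiv.card_le
  have horder : orderOf σ ≤ Nat.card Gal(L/K) := orderOf_le_card
  have hfinrank : finrank K L ≤ orderOf σ := Nat.le_of_dvd (orderOf_pos σ) h
  exact ⟨.of_card_aut_eq_finrank K L (by omega), isCyclic_of_orderOf_eq_card σ (by omega)⟩

theorem pow_smul_eq_add_sum {G A : Type*} [Monoid G] [AddCommMonoid A] [DistribMulAction G A]
    {g : G} {x c : A} (h : g • x = x + c) (m : ℕ) :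
    g ^ m • x = x + ∑ j ∈ Finset.range m, g ^ j • c := by
  induction m with
  | zero => simp
  | succ m ih =>
    rw [pow_succ, mul_smul, h, smul_add, ih, Finset.sum_range_succ, add_assoc]

section ExtendAutomorphism

variable {K L : Type*} [Field K] [Field L] [Algebra K L] {σ : Gal(L/K)}

theorem exists_algEquiv_adjoinRoot [FiniteDimensional K L] (f : L[X]) [Fact (Irreducible f)]
    {y : AdjoinRoot f}
    (hy : f.eval₂ ((algebraMap L (AdjoinRoot f)).comp (σ : L →+* L)) y = 0) :
    ∃ τ : Gal(AdjoinRoot f/K),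
      Function.Semiconj (algebraMap L (AdjoinRoot f)) σ τ ∧ τ (AdjoinRoot.root f) = y := by
  have : FiniteDimensional L (AdjoinRoot f) :=
    (AdjoinRoot.powerBasis (Fact.out : Irreducible f).ne_zero).finite
  have : FiniteDimensional K (AdjoinRoot f) := .trans K L _
  let i : L →ₐ[K] AdjoinRoot f := (IsScalarTower.toAlgHom K L _).comp σ
  let φ : AdjoinRoot f →ₐ[K] AdjoinRoot f := AdjoinRoot.liftAlgHom f i y hy
  exact ⟨.ofBijective φ (Algebra.IsAlgebraic.algHom_bijective φ),
    fun x ↦ (AdjoinRoot.liftAlgHom_of f i y hy x).symm, AdjoinRoot.liftAlgHom_root f i y hy⟩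

variable {M : Type*} [Field M] [Algebra K M] [Algebra L M] {τ : Gal(M/K)}

theorem pow_apply_algebraMap_of_semiconj (hτ : Function.Semiconj (algebraMap L M) σ τ) (m : ℕ)
    (x : L) : (τ ^ m) (algebraMap L M x) = algebraMap L M ((σ ^ m) x) := by
  simpa only [AlgEquiv.coe_pow] using ((hτ.iterate_right m).eq x).symm

theorem orderOf_dvd_orderOf_of_semiconj (hτ : Function.Semiconj (algebraMap L M) σ τ) :
    orderOf σ ∣ orderOf τ := by
  refine orderOf_dvd_of_pow_eq_one (AlgEquiv.ext fun x ↦ (algebraMap L M).injective ?_)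
  rw [← pow_apply_algebraMap_of_semiconj hτ, pow_orderOf_eq_one, AlgEquiv.one_apply,
    AlgEquiv.one_apply]

theorem pow_finrank_apply_eq_add_trace [FiniteDimensional K L] [IsGalois K L]
    (hσ : ∀ τ, τ ∈ Subgroup.zpowers σ) (hτ : Function.Semiconj (algebraMap L M) σ τ) {θ : M}
    {b : L} (hθ : τ θ = θ + algebraMap L M b) :
    (τ ^ finrank K L) θ = θ + algebraMap L M (algebraMap K L (Algebra.trace K L b)) := by
  have h := pow_smul_eq_add_sum (g := τ) hθ (finrank K L)
  simpa only [AlgEquiv.smul_def, pow_apply_algebraMap_of_semiconj hτ, ← map_sum,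
    ← trace_eq_sum_range_pow_of_generator hσ] using h

theorem finrank_mul_dvd_orderOf_of_trace_eq_one [FiniteDimensional K L] [IsGalois K L] (p : ℕ)
    [CharP M p] (hσ : ∀ τ, τ ∈ Subgroup.zpowers σ)
    (hτ : Function.Semiconj (algebraMap L M) σ τ) {θ : M} {b : L}
    (hθ : τ θ = θ + algebraMap L M b) (hb : Algebra.trace K L b = 1) :
    finrank K L * p ∣ orderOf τ := by
  obtain ⟨k, hk⟩ : finrank K L ∣ orderOf τ := by
    rw [← IsGalois.card_aut_eq_finrank, ← orderOf_eq_card_of_forall_mem_zpowers hσ]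
    exact orderOf_dvd_orderOf_of_semiconj hτ
  have hone : (τ ^ finrank K L) θ = θ + 1 := by
    rw [pow_finrank_apply_eq_add_trace hσ hτ hθ, hb, map_one, map_one]
  have hpow : θ = θ + k := by
    have h := pow_smul_eq_add_sum (g := τ ^ finrank K L) hone k
    rw [← pow_mul, ← hk, pow_orderOf_eq_one] at h
    simpa using h
  rw [hk]
  exact mul_dvd_mul_left _ ((CharP.cast_eq_zero_iff M p k).1 (left_eq_add.1 hpow))

end ExtendAutomorphism

section CyclicExtension

variable {K : Type u} [Field K]

theorem HasCyclicExtension.of_irreducible_X_pow_sub_C {n : ℕ} (hζ : (primitiveRoots n K).Nonempty)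
    {a : K} (ha : Irreducible (X ^ n - C a)) : HasCyclicExtension K n := by
  have : NeZero n := ⟨ne_zero_of_irreducible_X_pow_sub_C ha⟩
  exact ⟨SplittingField (X ^ n - C a), inferInstance, inferInstance,
    isGalois_of_isSplittingField_X_pow_sub_C hζ ha _,
    finrank_of_isSplittingField_X_pow_sub_C hζ ha _,
    isCyclic_of_isSplittingField_X_pow_sub_C hζ ha _⟩

variable (p : ℕ) [hp : Fact p.Prime] [CharP K p]

theorem HasCyclicExtension.finrank_mul_char {L : Type u} [Field L] [Algebra K L]
    [FiniteDimensional K L] [IsGalois K L] {σ : Gal(L/K)} (hσ : ∀ τ, τ ∈ Subgroup.zpowers σ)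
    {a b : L} (hb : Algebra.trace K L b = 1) (hab : σ a - a = b ^ p - b)
    (ha : ∀ x : L, x ^ p - x ≠ a) : HasCyclicExtension K (finrank K L * p) := by
  have : CharP L p := charP_of_injective_algebraMap (algebraMap K L).injective p
  let f : L[X] := X ^ p - X - C a
  have hirr : Irreducible f := irreducible_X_pow_sub_X_sub_C ha
  have : Fact (Irreducible f) := ⟨hirr⟩
  let M := AdjoinRoot f
  have : CharP M p := charP_of_injective_algebraMap (algebraMap L M).injective p
  let θ : M := AdjoinRoot.root f
  have hθ : θ ^ p - θ = algebraMap L M a := by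
    have h := AdjoinRoot.eval₂_root f
    simp only [f, eval₂_sub, eval₂_X_pow, eval₂_X, eval₂_C] at h
    exact sub_eq_zero.1 h
  have : FiniteDimensional L M := (AdjoinRoot.powerBasis hirr.ne_zero).finite
  have : FiniteDimensional K M := .trans K L M
  have hfinrank : finrank K M = finrank K L * p := by
    rw [← finrank_mul_finrank K L M, (AdjoinRoot.powerBasis hirr.ne_zero).finrank,
      AdjoinRoot.powerBasis_dim, natDegree_X_pow_sub_X_sub_C hp.out.one_lt]
  have hroot : f.eval₂ ((algebraMap L M).comp (σ : L →+* L)) (θ + algebraMap L M b) = 0 := by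
    have hab' := congrArg (algebraMap L M) hab
    simp only [map_sub, map_pow] at hab'
    simp only [f, eval₂_sub, eval₂_X_pow, eval₂_X, eval₂_C, add_pow_char, RingHom.comp_apply,
      RingHom.coe_coe]
    linear_combination hθ - hab'
  obtain ⟨τ, hτ, hτθ⟩ := exists_algEquiv_adjoinRoot f hroot
  obtain ⟨hgalois, hcyclic⟩ := isGalois_and_isCyclic_of_finrank_dvd_orderOf
    (hfinrank ▸ finrank_mul_dvd_orderOf_of_trace_eq_one p hσ hτ hτθ hb)
  exact ⟨M, inferInstance, inferInstance, hgalois, hfinrank, hcyclic⟩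

theorem HasCyclicExtension.mul_char {c : K} (hc : ∀ z : K, z ^ p - z ≠ c) {n : ℕ} (hn : n ≠ 0)
    (h : HasCyclicExtension K n) : HasCyclicExtension K (n * p) := by
  obtain ⟨L, _, _, _, rfl, hcyclic⟩ := h
  have : FiniteDimensional K L := .of_finrank_pos (Nat.pos_of_ne_zero hn)
  obtain ⟨σ, hσ⟩ := hcyclic.exists_generator
  obtain ⟨a, b, hb, hab, ha⟩ := exists_trace_eq_one_and_forall_pow_sub_self_ne hσ hc
  exact .finrank_mul_char p hσ hb hab ha

theorem HasCyclicExtension.mul_char_pow {c : K} (hc : ∀ z : K, z ^ p - z ≠ c) {n : ℕ} (hn : n ≠ 0)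
    (h : HasCyclicExtension K n) (s : ℕ) : HasCyclicExtension K (n * p ^ s) := by
  induction s with
  | zero => simpa using h
  | succ s ih =>
    rw [pow_succ, ← mul_assoc]
    exact ih.mul_char p hc (mul_ne_zero hn (pow_ne_zero s hp.out.ne_zero))

end CyclicExtension

section FractionField

theorem irreducible_X_pow_sub_C_of_prime {R K : Type*} [CommRing R] [IsDomain R]
    [IsIntegrallyClosed R] [Field K] [Algebra R K] [IsFractionRing R K] {π : R} (hπ : Prime π)
    {n : ℕ} (hn : n ≠ 0) : Irreducible (X ^ n - C (algebraMap R K π)) := by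
  have hmonic : (X ^ n - C π).Monic := monic_X_pow_sub_C π hn
  have hprime : (Ideal.span {π}).IsPrime := (Ideal.span_singleton_prime hπ.ne_zero).2 hπ
  have heisenstein : (X ^ n - C π).IsEisensteinAt (Ideal.span {π}) := by
    refine hmonic.isEisensteinAt_of_mem_of_notMem hprime.ne_top (fun {k} hk ↦ ?_) ?_
    · rw [natDegree_X_pow_sub_C] at hk
      rw [coeff_sub, coeff_X_pow, if_neg hk.ne, zero_sub, coeff_C, Ideal.neg_mem_iff]
      split_ifs <;> simp
    · rw [coeff_sub, coeff_X_pow, if_neg hn.symm, zero_sub, coeff_C_zero, Ideal.neg_mem_iff,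
        Ideal.span_singleton_pow, Ideal.mem_span_singleton, sq]
      exact fun h ↦ hπ.not_isUnit (hπ.irreducible.squarefree π h)
  have hirr : Irreducible (X ^ n - C π) := heisenstein.irreducible hprime hmonic.isPrimitive
    (by rw [natDegree_X_pow_sub_C]; exact Nat.pos_of_ne_zero hn)
  simpa using (hmonic.irreducible_iff_irreducible_map_fraction_map (K := K)).1 hirr

theorem dvd_natDegree_pow_sub_self {R : Type*} [Ring R] [NoZeroDivisors R] {n : ℕ} (hn : 1 < n)
    (y : R[X]) : n ∣ (y ^ n - y).natDegree := by
  obtain hy | hy := Nat.eq_zero_or_pos y.natDegree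
  · obtain ⟨c, rfl⟩ := natDegree_eq_zero.1 hy
    rw [← C_pow, ← C_sub, natDegree_C]
    exact dvd_zero n
  · have hlt : y.natDegree < (y ^ n).natDegree := by
      rw [natDegree_pow]
      exact lt_mul_left hy hn
    rw [natDegree_sub_eq_left_of_natDegree_lt hlt, natDegree_pow]
    exact dvd_mul_right n _

theorem pow_sub_self_ne_algebraMap_of_not_dvd_natDegree {F K : Type*} [Field F] [Field K]
    [Algebra F[X] K] [IsFractionRing F[X] K] {n : ℕ} (hn : 1 < n) {f : F[X]}
    (hf : ¬ n ∣ f.natDegree) (x : K) : x ^ n - x ≠ algebraMap F[X] K f := by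
  intro h
  obtain ⟨y, rfl, -⟩ := exists_integer_of_is_root_of_monic (monic_X_pow_sub_X_sub_C hn f) (r := x)
    (by simp [h])
  rw [← map_pow, ← map_sub] at h
  exact hf (IsFractionRing.injective F[X] K h ▸ dvd_natDegree_pow_sub_self hn y)

end FractionField

theorem hasCyclicExtension_ratFunc_of_isPrimitiveRoot {F : Type u} [Field F] {n : ℕ} (hn : n ≠ 0)
    {ζ : F} (hζ : IsPrimitiveRoot ζ n) : HasCyclicExtension (RatFunc F) n :=
  .of_irreducible_X_pow_sub_C
    ⟨_, (mem_primitiveRoots (Nat.pos_of_ne_zero hn)).2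
      (hζ.map_of_injective (algebraMap F (RatFunc F)).injective)⟩
    (irreducible_X_pow_sub_C_of_prime (R := F[X]) prime_X hn)

theorem exists_eq_mul_ringExpChar_pow {R : Type*} [NonAssocSemiring R] [NoZeroDivisors R]
    [Nontrivial R] {d d₁ : ℕ}
    (hchar0 : ringChar R = 0 → d₁ = d)
    (hcharp : ∀ p : ℕ, p.Prime → ringChar R = p → ∃ s : ℕ, d = d₁ * p ^ s) :
    ∃ s : ℕ, d = d₁ * ringExpChar R ^ s := by
  obtain hp | h0 := CharP.char_is_prime_or_zero R (ringChar R)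
  · rw [ringExpChar, max_eq_left hp.one_le]
    exact hcharp _ hp rfl
  · exact ⟨0, by simp [hchar0 h0]⟩

theorem stmt9_general {F : Type u} [Field F] {n : ℕ} (hn : n ≠ 0) {ζ : F}
    (hζ : IsPrimitiveRoot ζ n) (s : ℕ) :
    HasCyclicExtension (RatFunc F) (n * ringExpChar F ^ s) := by
  have hKummer : HasCyclicExtension (RatFunc F) n :=
    hasCyclicExtension_ratFunc_of_isPrimitiveRoot hn hζ
  obtain ⟨q, hq⟩ := ExpChar.exists F
  rw [ringExpChar.eq F q]
  cases hq with
  | zero => simpa using hKummer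
  | prime hp =>
    have : Fact q.Prime := ⟨hp⟩
    have : CharP (RatFunc F) q :=
      charP_of_injective_algebraMap (algebraMap F (RatFunc F)).injective q
    exact hKummer.mul_char_pow q (pow_sub_self_ne_algebraMap_of_not_dvd_natDegree hp.one_lt
      (by simpa using hp.ne_one : ¬ q ∣ (X : F[X]).natDegree)) hn s

/-- Let `F′` be a field, `d ≥ 1`, and `d₁` the `p`-free part of `d` (with `d₁ = d` in
characteristic `0`). If `F′` contains a primitive `d₁`-th root of unity, then `F′(X)` has
a cyclic Galois extension of degree `d`. -/
theorem stmt9 {F' : Type} [Field F'] (d d₁ : ℕ) (hd : 0 < d)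
    (hchar0 : ringChar F' = 0 → d₁ = d)
    (hcharp : ∀ p : ℕ, p.Prime → ringChar F' = p →
      ∃ s : ℕ, d = d₁ * p ^ s ∧ ¬ p ∣ d₁)
    (ζ : F') (hζ : IsPrimitiveRoot ζ d₁) :
    ∃ (L : Type) (_ : Field L) (_ : Algebra (RatFunc F') L),
      IsGalois (RatFunc F') L ∧
      Module.finrank (RatFunc F') L = d ∧
      IsCyclic (L ≃ₐ[RatFunc F'] L) := by
  obtain ⟨s, rfl⟩ := exists_eq_mul_ringExpChar_pow (R := F') hchar0
    fun p hp hchar ↦ (hcharp p hp hchar).imp fun _ ↦ And.left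
  exact stmt9_general (left_ne_zero_of_mul hd.ne') hζ s
end

section
/- (Data reduction.) Let F be a field and K an extension field of F. Let B₁, …, B_m ∈ M(k×ℓ, F) and let S ⊆ F be a finite subset with |S| ≥ r + 1. If there exist a′₁, …, a′_m ∈ K such that the matrix Σᵢ a′ᵢ Bᵢ ∈ M(k×ℓ, K) has rank at least r, then there exist a₁, …, a_m ∈ S such that the matrix Σᵢ aᵢ Bᵢ ∈ M(k×ℓ, F) has rank at least r. -/
open Matrix

/-!
Having rank at least `r` means having a nonvanishing `r × r` minor. For the generic combination
`∑ i, X i • B i`, such a minor is a polynomial over the base ring of degree at most `r` in each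
variable. If it does not vanish at the point `a'`, even one with coordinates in an extension, then
it is not the zero polynomial, so it cannot vanish on a whole grid whose sides have more than `r`
elements.
-/

section Minors

variable {R K m n : Type*} [Fintype n]

theorem card_le_rank_of_det_submatrix_ne_zero [CommRing R] [IsDomain R] {ι : Type*} [Fintype ι]
    [DecidableEq ι] (A : Matrix m n R) {e : ι → m} {f : ι → n} (h : (A.submatrix e f).det ≠ 0) :
    Fintype.card ι ≤ A.rank :=
  (rank_of_det_ne_zero h).symm.trans_le (rank_submatrix_le A e f)

variable [Field K] [Finite m]

theorem exists_linearIndependent_row_submatrix_of_le_rank (A : Matrix m n K) {r : ℕ}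
    (h : r ≤ A.rank) : ∃ e : Fin r → m, LinearIndependent K (A.submatrix e id).row := by
  rw [A.rank_eq_finrank_span_row] at h
  obtain ⟨v, hv, -, hli⟩ := Submodule.exists_fun_fin_finrank_span_eq K (Set.range A.row)
  choose e he using hv
  have hrow : (A.submatrix (e ∘ Fin.castLE h) id).row = v ∘ Fin.castLE h :=
    funext fun i ↦ he (Fin.castLE h i)
  exact ⟨e ∘ Fin.castLE h, hrow ▸ hli.comp _ (Fin.castLE_injective h)⟩

theorem exists_det_submatrix_ne_zero_of_le_rank (A : Matrix m n K) {r : ℕ} (h : r ≤ A.rank) :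
    ∃ (e : Fin r → m) (f : Fin r → n), (A.submatrix e f).det ≠ 0 := by
  obtain ⟨e, he⟩ := exists_linearIndependent_row_submatrix_of_le_rank A h
  have hrank : (A.submatrix e id)ᵀ.rank = r := by
    rw [rank_transpose, he.rank_matrix, Fintype.card_fin]
  obtain ⟨f, hf⟩ := exists_linearIndependent_row_submatrix_of_le_rank _ hrank.ge
  have hunit : IsUnit (A.submatrix e f)ᵀ := linearIndependent_rows_iff_isUnit.1 hf
  refine ⟨e, f, ?_⟩
  rw [← det_transpose]
  exact ((isUnit_iff_isUnit_det _).1 hunit).ne_zero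

end Minors

section PolynomialMatrices

open MvPolynomial

variable {R K σ m n : Type*} [CommRing R]

theorem degreeOf_det_le [Fintype n] [DecidableEq n] (A : Matrix n n (MvPolynomial σ R)) (i : σ)
    {d : ℕ} (hA : ∀ x y, (A x y).degreeOf i ≤ d) : A.det.degreeOf i ≤ Fintype.card n * d := by
  rw [det_apply']
  refine (degreeOf_sum_le i _ _).trans (Finset.sup_le fun τ _ ↦ ?_)
  calc
    degreeOf i (((Equiv.Perm.sign τ : ℤ) : MvPolynomial σ R) * ∏ x, A (τ x) x)
      ≤ degreeOf i (∏ x, A (τ x) x) := by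
        rw [← map_intCast (C : R →+* MvPolynomial σ R)]
        exact degreeOf_C_mul_le _ i _
    _ ≤ ∑ x, degreeOf i (A (τ x) x) := degreeOf_prod_le i _ _
    _ ≤ ∑ _x : n, d := Finset.sum_le_sum fun x _ ↦ hA (τ x) x
    _ = Fintype.card n * d := by simp

theorem exists_eval_ne_zero_of_degreeOf_lt_card [IsDomain R] [Finite σ] {p : MvPolynomial σ R}
    (hp : p ≠ 0) (S : σ → Finset R) (hS : ∀ i, p.degreeOf i < (S i).card) :
    ∃ a : σ → R, (∀ i, a i ∈ S i) ∧ eval a p ≠ 0 := by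
  by_contra! hvanish
  exact hp (eq_zero_of_eval_zero_at_prod_finset p S hS hvanish)

theorem exists_le_rank_map_eval_of_le_rank_map_aeval [IsDomain R] [Field K] [Algebra R K]
    [Finite σ] [Finite m] [Fintype n] (P : Matrix m n (MvPolynomial σ R)) {d : σ → ℕ}
    (hP : ∀ i x y, (P x y).degreeOf i ≤ d i) {r : ℕ} (S : σ → Finset R)
    (hS : ∀ i, r * d i < (S i).card) {a' : σ → K} (h : r ≤ (P.map (aeval a')).rank) :
    ∃ a : σ → R, (∀ i, a i ∈ S i) ∧ r ≤ (P.map (eval a)).rank := by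
  obtain ⟨e, f, hminor⟩ := exists_det_submatrix_ne_zero_of_le_rank _ h
  have hdet : (P.submatrix e f).det ≠ 0 := by
    intro hzero
    apply hminor
    rw [submatrix_map, ← AlgHom.mapMatrix_apply, ← AlgHom.map_det, hzero, map_zero]
  have hdeg (i : σ) : (P.submatrix e f).det.degreeOf i < (S i).card :=
    (degreeOf_det_le _ i fun x y ↦ hP i (e x) (f y)).trans_lt (by simpa using hS i)
  obtain ⟨a, haS, ha⟩ := exists_eval_ne_zero_of_degreeOf_lt_card hdet S hdeg
  rw [RingHom.map_det, RingHom.mapMatrix_apply, ← submatrix_map] at ha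
  exact ⟨a, haS, by simpa using card_le_rank_of_det_submatrix_ne_zero _ ha⟩

end PolynomialMatrices

section GenericCombination

open MvPolynomial

variable {R K ι m n : Type*} [CommRing R] [Fintype ι]

/-- The linear combination `∑ i, X i • B i` of the matrices `B i` with indeterminate coefficients;
the linear combinations of the `B i` are its specializations. -/
noncomputable def genericCombination (B : ι → Matrix m n R) : Matrix m n (MvPolynomial ι R) :=
  ∑ i, (X i : MvPolynomial ι R) • (B i).map C

theorem genericCombination_apply (B : ι → Matrix m n R) (x : m) (y : n) :
    genericCombination B x y = ∑ i, X i * C (B i x y) := by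
  simp [genericCombination, Matrix.sum_apply]

theorem genericCombination_map_aeval [CommRing K] [Algebra R K] (B : ι → Matrix m n R)
    (a : ι → K) :
    (genericCombination B).map (aeval a) = ∑ i, a i • (B i).map (algebraMap R K) := by
  ext x y
  simp [genericCombination_apply, Matrix.sum_apply]

theorem genericCombination_map_eval (B : ι → Matrix m n R) (a : ι → R) :
    (genericCombination B).map (eval a) = ∑ i, a i • B i := by
  ext x y
  simp [genericCombination_apply, Matrix.sum_apply]

theorem degreeOf_genericCombination_le (B : ι → Matrix m n R) (j : ι) (x : m) (y : n) :
    (genericCombination B x y).degreeOf j ≤ 1 := by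
  rw [genericCombination_apply]
  refine (degreeOf_sum_le j _ _).trans (Finset.sup_le fun i _ ↦ ?_)
  calc
    degreeOf j (X i * C (B i x y)) ≤ degreeOf j (X i : MvPolynomial ι R) :=
      degreeOf_mul_C_le _ j _
    _ ≤ (X i : MvPolynomial ι R).totalDegree := degreeOf_le_totalDegree _ j
    _ ≤ 1 := (totalDegree_monomial_le _ _).trans (by simp)

theorem stmt10_general [IsDomain R] [Field K] [Algebra R K] [Finite m] [Fintype n]
    (B : ι → Matrix m n R) (S : ι → Finset R) (r : ℕ) (hS : ∀ i, r + 1 ≤ (S i).card)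
    (a' : ι → K) (h : r ≤ (∑ i, a' i • (B i).map (algebraMap R K)).rank) :
    ∃ a : ι → R, (∀ i, a i ∈ S i) ∧ r ≤ (∑ i, a i • B i).rank := by
  simp only [← genericCombination_map_aeval, ← genericCombination_map_eval] at h ⊢
  exact exists_le_rank_map_eval_of_le_rank_map_aeval (genericCombination B)
    (degreeOf_genericCombination_le B) S (by simpa using hS) h

end GenericCombination

/-- Data reduction: if some `K`-linear combination of the matrices `B₁, …, B_m` over `F`
has rank at least `r` (over an extension field `K` of `F`), then some linear combination
with coefficients from any prescribed subset `S ⊆ F` of size at least `r + 1` has rank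
at least `r`. -/
theorem stmt10 {F K : Type} [Field F] [Field K] [Algebra F K]
    {k l m : ℕ} (B : Fin m → Matrix (Fin k) (Fin l) F)
    (S : Finset F) (r : ℕ) (hS : r + 1 ≤ S.card)
    (a' : Fin m → K)
    (h : r ≤ (∑ i, a' i • (B i).map (algebraMap F K)).rank) :
    ∃ a : Fin m → F, (∀ i, a i ∈ S) ∧ r ≤ (∑ i, a i • B i).rank :=
  stmt10_general B (fun _ ↦ S) r (fun _ ↦ hS) a' h
end

section
/- (Blow-up rank increment dichotomy.) For all positive integers n, d, d′ there exists a natural number N such that the following holds. Let F be a field with |F| ≥ N, let B ≤ M(n,F) be a matrix space, let r < d′ be a nonnegative integer, and suppose the (d,d)-blow-up B^{(d,d)} contains a matrix A with rank(A) = rd. Then either B has an (n − r)-shrunk subspace, or the (dd′, dd′)-blow-up B^{(dd′,dd′)} contains a matrix of rank at least (r + 1)dd′. -/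
open Matrix Kronecker

/-- The (k,ℓ)-blow-up of a matrix space `B ≤ M(n,F)`. -/
def blowUp {F : Type} [Field F] {n : ℕ} (B : Submodule F (Matrix (Fin n) (Fin n) F))
    (k ℓ : ℕ) : Submodule F (Matrix (Fin n × Fin k) (Fin n × Fin ℓ) F) :=
  Submodule.span F {M | ∃ A ∈ B, ∃ T : Matrix (Fin k) (Fin ℓ) F, M = A ⊗ₖ T}

/-- `U ≤ F^n` is an `s`-shrunk subspace of `B` if `dim B(U) ≤ dim U − s`. -/
def IsShrunkSubspace {F : Type} [Field F] {n : ℕ}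
    (B : Submodule F (Matrix (Fin n) (Fin n) F)) (U : Submodule F (Fin n → F)) (s : ℕ) : Prop :=
  Module.finrank F (Submodule.span F {v | ∃ A ∈ B, ∃ u ∈ U, v = A.mulVec u}) + s ≤
    Module.finrank F U

/-!
Fix a matrix `A` of rank `r * d` in the `(d, d)`-blow-up and follow its Wong sequence, the spaces of
end points of chains `A x₀ = 0`, `A xₗ₊₁ = Cₗ xₗ` with all `Cₗ` in the blow-up.

If the blow-up maps the first `r + 1` spaces into the range of `A`, then their images under the
blow-up are subspaces `W ⊗ F^d`, whose dimensions are multiples of `d` bounded by `r * d`, so the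
sequence becomes stationary; the slices of the stationary space span an `(n - r)`-shrunk subspace.

Otherwise some chain of length `j ≤ r < d'` leaves the range of `A`. In the blow-up of size `d * d'`
let `C = ∑ₗ Cₗ ⊗ E_{l+1,l}`. The vectors `xₗ ⊗ eₗ` form a chain for `A ⊗ 1` along the single matrix
`C` which leaves the range of `A ⊗ 1`. For `f ≠ 0` the range of `A ⊗ 1 + f C` contains the escaping
vector `w`, so its rank is that of `[A ⊗ 1 + f C | w]`, which is at least the rank
`r * d * d' + 1` of `[A ⊗ 1 | w]` for all but finitely many `f`.

Finally, a rank above `r * k` in the `(k, k)`-blow-up can be raised to `(r + 1) * k` (the regularity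
lemma of Ivanyos, Qiao and Subrahmanyam). For a suitable extension `K` of `F`, the matrices
`M(k, K)` are spanned over `K` by a cyclic division algebra `D ⊇ F`. An `n × n` matrix over `D`,
read as an `nk × nk` matrix over `K`, has rank divisible by `k`. As `F` is large, a rank attained
in the `K`-span of a set of matrices is attained in its `F`-span; this lets one pass from the
blow-up to the `F`-span of `B ⊗ D` and back without losing rank.
-/

section RankFactorization

theorem exists_rank_factorization {D : Type*} [DivisionRing D] {m n : Type*} [Fintype m]
    [Fintype n] (X : Matrix m n D) :
    ∃ (ρ : ℕ) (Y : Matrix m (Fin ρ) D) (Z : Matrix (Fin ρ) n D) (Y' : Matrix (Fin ρ) m D)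
      (Z' : Matrix n (Fin ρ) D), X = Y * Z ∧ Y' * Y = 1 ∧ Z * Z' = 1 := by
  classical
  set f := X.toLinearMapRight'
  set e := (Module.finBasis D (LinearMap.range f)).equivFun
  set onto := e.toLinearMap ∘ₗ f.rangeRestrict
  set into := (LinearMap.range f).subtype ∘ₗ e.symm.toLinearMap
  obtain ⟨g, hg⟩ := LinearMap.exists_rightInverse_of_surjective onto <| by
    rw [LinearMap.range_comp, LinearMap.range_rangeRestrict, Submodule.map_top, LinearEquiv.range]
  obtain ⟨h, hh⟩ := LinearMap.exists_leftInverse_of_injective into <| by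
    rw [LinearMap.ker_eq_bot]
    exact (Submodule.subtype_injective _).comp e.symm.injective
  have hf : into ∘ₗ onto = f := by
    refine LinearMap.ext fun v => ?_
    simp [into, onto]
  refine ⟨_, toLinearMapRight'.symm onto, toLinearMapRight'.symm into, toLinearMapRight'.symm g,
    toLinearMapRight'.symm h, ?_, ?_, ?_⟩ <;>
  · apply toLinearMapRight'.injective
    simp [toLinearMapRight'_mul, hf, hg, hh, f]

variable {K : Type*} [Field K] {m n p : Type*}

theorem rank_eq_card_of_factorization [Fintype m] [Fintype n] [Fintype p] [DecidableEq p]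
    {X : Matrix m n K} {Y : Matrix m p K} {Z : Matrix p n K} {Y' : Matrix p m K}
    {Z' : Matrix n p K} (hX : X = Y * Z) (hY : Y' * Y = 1) (hZ : Z * Z' = 1) :
    X.rank = Fintype.card p := by
  apply le_antisymm
  · rw [hX]
    exact (rank_mul_le_left _ _).trans (rank_le_card_width _)
  · have hone : Y' * X * Z' = 1 := by
      rw [hX, ← Matrix.mul_assoc, hY, Matrix.one_mul, hZ]
    calc Fintype.card p = (Y' * X * Z').rank := by rw [hone, rank_one]
      _ ≤ (Y' * X).rank := rank_mul_le_left _ _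
      _ ≤ X.rank := rank_mul_le_right _ _

theorem rank_map_ringHom {F : Type*} [Field F] [Finite m] [Fintype n] (f : F →+* K)
    (X : Matrix m n F) : (X.map f).rank = X.rank := by
  cases nonempty_fintype m
  obtain ⟨ρ, Y, Z, Y', Z', hX, hY, hZ⟩ := exists_rank_factorization X
  rw [rank_eq_card_of_factorization hX hY hZ]
  refine rank_eq_card_of_factorization (Y := Y.map f) (Z := Z.map f) (Y' := Y'.map f)
    (Z' := Z'.map f) ?_ ?_ ?_
  · rw [hX, Matrix.map_mul]
  · rw [← Matrix.map_mul, hY, Matrix.map_one _ (map_zero f) (map_one f)]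
  · rw [← Matrix.map_mul, hZ, Matrix.map_one _ (map_zero f) (map_one f)]

theorem rank_kronecker_one [Finite m] [Fintype n] [Fintype p] [DecidableEq p]
    (A : Matrix m n K) : (A ⊗ₖ (1 : Matrix p p K)).rank = A.rank * Fintype.card p := by
  cases nonempty_fintype m
  obtain ⟨ρ, Y, Z, Y', Z', hX, hY, hZ⟩ := exists_rank_factorization A
  rw [rank_eq_card_of_factorization hX hY hZ, ← Fintype.card_prod]
  refine rank_eq_card_of_factorization (Y := Y ⊗ₖ 1) (Z := Z ⊗ₖ 1) (Y' := Y' ⊗ₖ 1)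
    (Z' := Z' ⊗ₖ 1) ?_ ?_ ?_
  · rw [← mul_kronecker_mul, Matrix.one_mul, hX]
  · rw [← mul_kronecker_mul, Matrix.one_mul, hY, one_kronecker_one]
  · rw [← mul_kronecker_mul, Matrix.one_mul, hZ, one_kronecker_one]

theorem le_rank_iff_exists_det_ne_zero [Fintype m] [Fintype n] {A : Matrix m n K} {R : ℕ} :
    R ≤ A.rank ↔ ∃ (P : Matrix (Fin R) m K) (Q : Matrix n (Fin R) K), (P * A * Q).det ≠ 0 := by
  constructor
  · intro hR
    obtain ⟨ρ, Y, Z, Y', Z', hX, hY, hZ⟩ := exists_rank_factorization A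
    have hρ : R ≤ ρ := by
      rwa [rank_eq_card_of_factorization hX hY hZ, Fintype.card_fin] at hR
    have hone : Y' * A * Z' = 1 := by
      rw [hX, ← Matrix.mul_assoc, hY, Matrix.one_mul, hZ]
    refine ⟨Y'.submatrix (Fin.castLE hρ) id, Z'.submatrix id (Fin.castLE hρ), ?_⟩
    have hsub : Y'.submatrix (Fin.castLE hρ) id * A * Z'.submatrix id (Fin.castLE hρ) = 1 := by
      rw [← Matrix.submatrix_one _ (Fin.castLE_injective hρ), ← hone]
      ext i j
      simp [Matrix.mul_apply]
    rw [hsub, det_one]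
    exact one_ne_zero
  · rintro ⟨P, Q, hdet⟩
    calc R = (P * A * Q).rank := by rw [rank_of_det_ne_zero hdet, Fintype.card_fin]
      _ ≤ (P * A).rank := rank_mul_le_left _ _
      _ ≤ A.rank := rank_mul_le_right _ _

end RankFactorization

section RankOfSpan

variable {K m n : Type*} [Field K] [Finite m] [Fintype n] {R : ℕ}

open Polynomial in
theorem exists_mem_le_rank_add_smul {A B : Matrix m n K} {t : K} (h : R ≤ (A + t • B).rank)
    {s : Finset K} (hs : R < s.card) : ∃ c ∈ s, R ≤ (A + c • B).rank := by
  cases nonempty_fintype m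
  obtain ⟨P, Q, hPQ⟩ := le_rank_iff_exists_det_ne_zero.1 h
  set p : K[X] := ((X : K[X]) • (P * B * Q).map C + (P * A * Q).map C).det with hp
  have heval (x : K) : p.eval x = (P * (A + x • B) * Q).det := by
    rw [hp, ← coe_evalRingHom, RingHom.map_det]
    congr 1
    ext i j
    simp [-Matrix.map_mul, Matrix.mul_add, Matrix.add_mul, add_comm, mul_comm x]
  have hdeg : p.natDegree ≤ R :=
    (natDegree_det_X_add_C_le (P * B * Q) (P * A * Q)).trans_eq (Fintype.card_fin R)
  by_contra! hlt
  have hroots : ∀ c ∈ s, p.eval c = 0 := by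
    intro c hc
    by_contra hne
    exact (hlt c hc).not_ge (le_rank_iff_exists_det_ne_zero.2 ⟨P, Q, heval c ▸ hne⟩)
  apply hPQ
  rw [← heval, eq_zero_of_natDegree_lt_card_of_eval_eq_zero' p s hroots (hdeg.trans_lt hs),
    eval_zero]

variable {F : Type*} [Field F] [Algebra F K]

theorem exists_mem_span_le_rank (hF : (R : Cardinal) < Cardinal.mk F) {S : Set (Matrix m n K)}
    {M : Matrix m n K} (hM : M ∈ Submodule.span K S) (hR : R ≤ M.rank) :
    ∃ M' ∈ Submodule.span F S, R ≤ M'.rank := by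
  suffices H : ∀ Y : Matrix m n K, R ≤ (Y + M).rank →
      ∃ M' ∈ Submodule.span F S, R ≤ (Y + M').rank by
    simpa using H 0 (by rwa [zero_add])
  clear hR
  induction hM using Submodule.closure_induction with
  | zero => exact fun Y hY => ⟨0, zero_mem _, hY⟩
  | add x y _ _ hx hy =>
    intro Y hY
    obtain ⟨y', hy', hR₁⟩ := hy (Y + x) (by rwa [add_assoc])
    obtain ⟨x', hx', hR₂⟩ := hx (Y + y') (by rwa [add_right_comm])
    exact ⟨x' + y', add_mem hx' hy', by rwa [add_comm x', ← add_assoc]⟩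
  | smul_mem c x hx =>
    intro Y hY
    obtain ⟨s, hs⟩ : ∃ s : Finset F, R + 1 = s.card :=
      Cardinal.exists_finset_eq_card (by exact_mod_cast Cardinal.natCast_add_one_le_iff.2 hF)
    obtain ⟨c', hc', hR⟩ := exists_mem_le_rank_add_smul hY
      (s := s.map ⟨algebraMap F K, (algebraMap F K).injective⟩) (by simp [← hs])
    obtain ⟨f, -, rfl⟩ := Finset.mem_map.1 hc'
    exact ⟨f • x, Submodule.smul_mem _ _ (Submodule.subset_span hx), by simpa using hR⟩

theorem exists_mem_le_rank_of_mem_span_map {V : Submodule F (Matrix m n F)} {N : Matrix m n K}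
    (hF : (N.rank : Cardinal) < Cardinal.mk F)
    (hN : N ∈ Submodule.span K
      (V.map (Algebra.linearMap F K).mapMatrix : Set (Matrix m n K))) :
    ∃ M ∈ V, N.rank ≤ M.rank := by
  obtain ⟨N', hN', hrank⟩ := exists_mem_span_le_rank hF hN le_rfl
  rw [Submodule.span_eq] at hN'
  obtain ⟨M, hM, rfl⟩ := hN'
  exact ⟨M, hM, hrank.trans_eq (rank_map_ringHom (algebraMap F K) M)⟩

end RankOfSpan

section BlockRank

variable {R D K m n p k : Type*}

theorem comp_matrix_mul [NonUnitalNonAssocSemiring R] [Fintype n] [Fintype k]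
    (X : Matrix m n (Matrix k k R)) (Y : Matrix n p (Matrix k k R)) :
    comp m p k k R (X * Y) = comp m n k k R X * comp n p k k R Y := by
  ext ⟨i, a⟩ ⟨j, b⟩
  simp [Matrix.mul_apply, Fintype.sum_prod_type, Matrix.sum_apply]

theorem card_dvd_rank_comp_map [DivisionRing D] [Field K] [Finite m] [Fintype n] [Fintype k]
    [DecidableEq k] (φ : D →+* Matrix k k K) (X : Matrix m n D) :
    Fintype.card k ∣ (comp m n k k K (X.map φ)).rank := by
  cases nonempty_fintype m
  obtain ⟨ρ, Y, Z, Y', Z', hX, hY, hZ⟩ := exists_rank_factorization X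
  rw [rank_eq_card_of_factorization (p := Fin ρ × k) (Y := comp _ _ _ _ _ (Y.map φ))
    (Z := comp _ _ _ _ _ (Z.map φ)) (Y' := comp _ _ _ _ _ (Y'.map φ))
    (Z' := comp _ _ _ _ _ (Z'.map φ)), Fintype.card_prod]
  · exact dvd_mul_left _ _
  · rw [← comp_matrix_mul, ← Matrix.map_mul, hX]
  · rw [← comp_matrix_mul, ← Matrix.map_mul, hY, Matrix.map_one _ φ.map_zero φ.map_one, comp_one]
  · rw [← comp_matrix_mul, ← Matrix.map_mul, hZ, Matrix.map_one _ φ.map_zero φ.map_one, comp_one]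

end BlockRank

section TwistedCentralizer

variable {F A : Type*} [CommSemiring F] [Semiring A] [Algebra F A]

/-- The subalgebra of all `x` that commute with `w` up to the twist `τ`, i.e. `w x = τ(x) w`. -/
def twistedCentralizer (τ : A →ₐ[F] A) (w : A) : Subalgebra F A where
  carrier := {x | w * x = τ x * w}
  mul_mem' {x y} hx hy := by
    simp only [Set.mem_ofPred_eq] at hx hy ⊢
    rw [← mul_assoc, hx, mul_assoc, hy, map_mul, mul_assoc]
  add_mem' {x y} hx hy := by
    simp only [Set.mem_ofPred_eq] at hx hy ⊢
    rw [mul_add, hx, hy, map_add, add_mul]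
  algebraMap_mem' a := by
    simp only [Set.mem_ofPred_eq, AlgHom.commutes, Algebra.commutes]

theorem mem_twistedCentralizer {τ : A →ₐ[F] A} {w x : A} :
    x ∈ twistedCentralizer τ w ↔ w * x = τ x * w := Iff.rfl

theorem mem_twistedCentralizer_of_mul_eq_one {τ : A →ₐ[F] A} {w x y : A}
    (hx : x ∈ twistedCentralizer τ w) (hxy : x * y = 1) (hyx : y * x = 1) :
    y ∈ twistedCentralizer τ w := by
  rw [mem_twistedCentralizer] at hx ⊢
  calc w * y = τ (y * x) * w * y := by rw [hyx, map_one, one_mul]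
    _ = τ y * (τ x * w) * y := by simp only [map_mul, mul_assoc]
    _ = τ y * w * (x * y) := by rw [← hx]; simp only [mul_assoc]
    _ = τ y * w := by rw [hxy, mul_one]

end TwistedCentralizer

section AdjoinSpan

theorem diagonal_mem_adjoin_diagonal {K ι : Type*} [Field K] [Fintype ι] [DecidableEq ι]
    {y : ι → K} (hy : Function.Injective y) (z : ι → K) :
    diagonal z ∈ Algebra.adjoin K {diagonal y} := by
  set p := Lagrange.interpolate Finset.univ y z
  have hp : Polynomial.aeval y p = z := by
    ext i
    rw [Polynomial.aeval_pi_apply₂, Polynomial.coe_aeval_eq_eval,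
      Lagrange.eval_interpolate_at_node _ hy.injOn (Finset.mem_univ i)]
  have hdiag : Polynomial.aeval (diagonal y) p = diagonal z := by
    rw [← diagonalAlgHom_apply K, Polynomial.aeval_algHom_apply, hp, diagonalAlgHom_apply]
  exact hdiag ▸ Polynomial.aeval_mem_adjoin_singleton K _

theorem span_eq_top_of_adjoin_eq_top {K A : Type*} [CommSemiring K] [Semiring A] [Algebra K A]
    {S : Submonoid A} (hS : Algebra.adjoin K (S : Set A) = ⊤) :
    Submodule.span K (S : Set A) = ⊤ := by
  rw [← Submonoid.closure_eq S, ← Algebra.adjoin_eq_span, hS, Algebra.top_toSubmodule]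

end AdjoinSpan

section LaurentShift

theorem hahnSeries_sum_ne_zero {Γ R ι : Type*} [LinearOrder Γ] [Zero Γ] [AddCommMonoid R]
    {s : Finset ι} {f : ι → HahnSeries Γ R} {i₀ : ι} (hi₀ : i₀ ∈ s) (hf : f i₀ ≠ 0)
    (hlt : ∀ i ∈ s, i ≠ i₀ → f i ≠ 0 → (f i₀).order < (f i).order) : ∑ i ∈ s, f i ≠ 0 := by
  intro hsum
  have hcoeff : ∑ i ∈ s, (f i).coeff (f i₀).order = 0 := by
    rw [← HahnSeries.coeff_sum, hsum, HahnSeries.coeff_zero]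
  rw [Finset.sum_eq_single_of_mem i₀ hi₀] at hcoeff
  · exact hf (HahnSeries.coeff_order_eq_zero.1 hcoeff)
  · intro i hi hne
    by_cases hfi : f i = 0
    · rw [hfi, HahnSeries.coeff_zero]
    · exact HahnSeries.coeff_eq_zero_of_lt_order (hlt i hi hne hfi)

/-- Coefficientwise application of an algebra homomorphism to Laurent series. -/
noncomputable def laurentMap {F L : Type*} [Field F] [Field L] [Algebra F L] (σ : L →ₐ[F] L) :
    LaurentSeries L →ₐ[F] LaurentSeries L where
  toFun x := HahnSeries.map x σ
  map_one' := HahnSeries.map_one (σ : L →+* L).toMonoidWithZeroHom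
  map_mul' _ _ := HahnSeries.map_mul (σ : L →ₙ+* L)
  map_zero' := HahnSeries.map_zero (σ : ZeroHom L L)
  map_add' _ _ := HahnSeries.map_add (σ : L →+ L)
  commutes' a := by
    rw [HahnSeries.algebraMap_apply', PowerSeries.algebraMap_apply, HahnSeries.ofPowerSeries_C]
    exact (HahnSeries.map_C _ (σ : L →+* L)).trans (by simp)

variable {F L : Type*} [Field F] [Field L] [Algebra F L] (σ : L →ₐ[F] L)

theorem laurentMap_single (i : ℤ) (a : L) :
    laurentMap σ (HahnSeries.single i a) = HahnSeries.single i (σ a) :=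
  HahnSeries.map_single (σ : ZeroHom L L)

theorem order_laurentMap (x : LaurentSeries L) : (laurentMap σ x).order = x.order := by
  have hcoeff (i : ℤ) : (laurentMap σ x).coeff i = σ (x.coeff i) := rfl
  by_cases hx : x = 0
  · rw [hx, map_zero]
  · apply le_antisymm <;> apply HahnSeries.order_le_of_coeff_ne_zero
    · rw [hcoeff, map_ne_zero]
      exact HahnSeries.coeff_order_eq_zero.not.2 hx
    · rw [← map_ne_zero σ, ← hcoeff]
      exact HahnSeries.coeff_order_eq_zero.not.2 ((map_ne_zero _).2 hx)

variable {m : ℕ}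

variable (L) in
/-- The entries of the cyclic shift matrix: the Laurent variable at the wrap-around, else `1`. -/
noncomputable def shiftWeight (i : Fin (m + 1)) : LaurentSeries L :=
  if i = 0 then HahnSeries.single 1 1 else 1

variable (L m) in
/-- The cyclic shift whose `(m + 1)`-st power is the Laurent variable. -/
noncomputable def shiftMatrix : Matrix (Fin (m + 1)) (Fin (m + 1)) (LaurentSeries L) :=
  Matrix.of fun i j => if i = j + 1 then shiftWeight L i else 0

theorem shiftWeight_ne_zero (i : Fin (m + 1)) : shiftWeight L i ≠ 0 := by
  unfold shiftWeight
  split_ifs <;> simp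

theorem laurentMap_shiftWeight (i : Fin (m + 1)) :
    laurentMap σ (shiftWeight L i) = shiftWeight L i := by
  unfold shiftWeight
  split_ifs
  · rw [laurentMap_single, map_one]
  · rw [map_one]

theorem order_shiftWeight (i : Fin (m + 1)) :
    (m + 1 : ℤ) * (shiftWeight L (i + 1)).order + ((i + 1 : Fin (m + 1)) : ℕ) = (i : ℕ) + 1 := by
  rcases Fin.eq_castSucc_or_eq_last i with ⟨j, rfl⟩ | rfl
  · rw [Fin.coeSucc_eq_succ, shiftWeight, if_neg (Fin.succ_ne_zero _)]
    simp
  · simp [shiftWeight]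

theorem shiftMatrix_mul_apply (X : Matrix (Fin (m + 1)) (Fin (m + 1)) (LaurentSeries L))
    (i j : Fin (m + 1)) :
    (shiftMatrix L m * X) (i + 1) j = shiftWeight L (i + 1) * X i j := by
  simp [shiftMatrix, Matrix.mul_apply]

theorem mul_shiftMatrix_apply (X : Matrix (Fin (m + 1)) (Fin (m + 1)) (LaurentSeries L))
    (i j : Fin (m + 1)) :
    (X * shiftMatrix L m) i j = X i (j + 1) * shiftWeight L (j + 1) := by
  simp [shiftMatrix, Matrix.mul_apply]

theorem shiftMatrix_mul_single (i j : Fin (m + 1)) (a : LaurentSeries L) :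
    shiftMatrix L m * Matrix.single i j a =
      Matrix.single (i + 1) j (shiftWeight L (i + 1) * a) := by
  ext1 p q
  obtain ⟨p, rfl⟩ : ∃ p', p = p' + 1 := ⟨p - 1, (sub_add_cancel p 1).symm⟩
  simp only [shiftMatrix_mul_apply, Matrix.single_apply, add_left_inj, mul_ite, mul_zero]
  split_ifs with h
  · rw [h.1]
  · rfl

variable (m) in
/-- The cyclic algebra of `σ`, represented by the matrices over the Laurent series that commute with
the cyclic shift up to `σ`; this is the division algebra behind the regularity lemma. -/
noncomputable abbrev cyclicAlgebra :
    Subalgebra F (Matrix (Fin (m + 1)) (Fin (m + 1)) (LaurentSeries L)) :=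
  twistedCentralizer (laurentMap σ).mapMatrix (shiftMatrix L m)

theorem mem_cyclicAlgebra_iff {X : Matrix (Fin (m + 1)) (Fin (m + 1)) (LaurentSeries L)} :
    X ∈ cyclicAlgebra σ m ↔ ∀ i j, shiftWeight L (i + 1) * X i j =
      laurentMap σ (X (i + 1) (j + 1)) * shiftWeight L (j + 1) := by
  rw [mem_twistedCentralizer, ← Matrix.ext_iff]
  refine (Equiv.addRight 1).surjective.forall.trans (forall₂_congr fun i j => ?_)
  rw [Equiv.coe_addRight, shiftMatrix_mul_apply, mul_shiftMatrix_apply, AlgHom.mapMatrix_apply,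
    Matrix.map_apply]

theorem shiftMatrix_mem_cyclicAlgebra : shiftMatrix L m ∈ cyclicAlgebra σ m := by
  rw [mem_cyclicAlgebra_iff]
  intro i j
  simp only [shiftMatrix, Matrix.of_apply, add_left_inj]
  split_ifs with h
  · rw [laurentMap_shiftWeight, h]
  · rw [map_zero, mul_zero, zero_mul]

theorem diagonal_mem_cyclicAlgebra {y : Fin (m + 1) → LaurentSeries L}
    (hy : ∀ i, laurentMap σ (y (i + 1)) = y i) : Matrix.diagonal y ∈ cyclicAlgebra σ m := by
  rw [mem_cyclicAlgebra_iff]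
  intro i j
  simp only [Matrix.diagonal_apply, add_left_inj]
  split_ifs with h
  · rw [hy, h, mul_comm]
  · rw [map_zero, mul_zero, zero_mul]

theorem adjoin_cyclicAlgebra {y : Fin (m + 1) → LaurentSeries L} (hinj : Function.Injective y)
    (hy : ∀ i, laurentMap σ (y (i + 1)) = y i) :
    Algebra.adjoin (LaurentSeries L)
      (cyclicAlgebra σ m : Set (Matrix (Fin (m + 1)) (Fin (m + 1)) (LaurentSeries L))) = ⊤ := by
  set E := Algebra.adjoin (LaurentSeries L)
    (cyclicAlgebra σ m : Set (Matrix (Fin (m + 1)) (Fin (m + 1)) (LaurentSeries L)))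
  have hshift : shiftMatrix L m ∈ E := Algebra.subset_adjoin (shiftMatrix_mem_cyclicAlgebra σ)
  have hdiag (z : Fin (m + 1) → LaurentSeries L) : Matrix.diagonal z ∈ E :=
    Algebra.adjoin_mono (Set.singleton_subset_iff.2 (diagonal_mem_cyclicAlgebra σ hy))
      (diagonal_mem_adjoin_diagonal hinj z)
  have hsingle (j c : Fin (m + 1)) : ∀ a, Matrix.single (j + c) j a ∈ E := by
    induction c using Fin.induction with
    | zero =>
      intro a
      rw [add_zero, ← Matrix.diagonal_single]
      exact hdiag _
    | succ c ih =>
      intro a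
      have hmul := E.mul_mem hshift (ih ((shiftWeight L (j + c.castSucc + 1))⁻¹ * a))
      rwa [shiftMatrix_mul_single, mul_inv_cancel_left₀ (shiftWeight_ne_zero _), add_assoc,
        Fin.coeSucc_eq_succ] at hmul
  refine eq_top_iff.2 fun M _ => ?_
  rw [Matrix.matrix_eq_sum_single M]
  refine sum_mem fun i _ => sum_mem fun j _ => ?_
  rw [← add_sub_cancel j i]
  exact hsingle _ _ _

/-- The order of an entry in a variable `s` with `s ^ (m + 1) = t`, after conjugation by
`diag(1, s, …, s ^ m)`, which turns the cyclic shift into `s` times a permutation matrix. -/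
noncomputable def conjOrder (X : Matrix (Fin (m + 1)) (Fin (m + 1)) (LaurentSeries L))
    (i j : Fin (m + 1)) : ℤ :=
  (m + 1) * (X i j).order + (i : ℕ) - (j : ℕ)

variable {X : Matrix (Fin (m + 1)) (Fin (m + 1)) (LaurentSeries L)}

theorem conjOrder_add_one (hX : X ∈ cyclicAlgebra σ m) {i j : Fin (m + 1)} (hij : X i j ≠ 0) :
    X (i + 1) (j + 1) ≠ 0 ∧ conjOrder X (i + 1) (j + 1) = conjOrder X i j := by
  rw [mem_cyclicAlgebra_iff] at hX
  have hne : laurentMap σ (X (i + 1) (j + 1)) * shiftWeight L (j + 1) ≠ 0 :=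
    hX i j ▸ mul_ne_zero (shiftWeight_ne_zero _) hij
  have horder := congrArg HahnSeries.order (hX i j)
  rw [HahnSeries.order_mul (shiftWeight_ne_zero _) hij,
    HahnSeries.order_mul (left_ne_zero_of_mul hne) (shiftWeight_ne_zero _),
    order_laurentMap] at horder
  refine ⟨(map_ne_zero _).1 (left_ne_zero_of_mul hne), ?_⟩
  unfold conjOrder
  linear_combination (-(m + 1 : ℤ)) * horder + order_shiftWeight (L := L) i -
    order_shiftWeight (L := L) j

theorem conjOrder_add (hX : X ∈ cyclicAlgebra σ m) {i j : Fin (m + 1)} (hij : X i j ≠ 0)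
    (c : Fin (m + 1)) :
    X (i + c) (j + c) ≠ 0 ∧ conjOrder X (i + c) (j + c) = conjOrder X i j := by
  induction c using Fin.induction with
  | zero => simpa only [add_zero, and_true] using hij
  | succ c ih =>
    rw [← Fin.coeSucc_eq_succ, ← add_assoc, ← add_assoc, ← ih.2]
    exact conjOrder_add_one σ hX ih.1

theorem exists_conjOrder_le (hX : X ∈ cyclicAlgebra σ m) (hX0 : X ≠ 0) (j : Fin (m + 1)) :
    ∃ i, X i j ≠ 0 ∧ ∀ p q, X p q ≠ 0 → conjOrder X i j ≤ conjOrder X p q := by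
  classical
  have hsupp : ({pq | X pq.1 pq.2 ≠ 0} : Finset (Fin (m + 1) × Fin (m + 1))).Nonempty := by
    obtain ⟨p, hp⟩ := Function.ne_iff.1 hX0
    obtain ⟨q, hq⟩ := Function.ne_iff.1 hp
    exact ⟨(p, q), by simpa using hq⟩
  obtain ⟨⟨p, q⟩, hpq, hmin⟩ := Finset.exists_min_image _ (fun pq => conjOrder X pq.1 pq.2) hsupp
  obtain ⟨hne, heq⟩ := conjOrder_add σ hX (by simpa using hpq : X p q ≠ 0) (j - q)
  rw [add_sub_cancel] at hne heq
  exact ⟨_, hne, fun p' q' h => heq.trans_le (hmin (p', q') (by simpa using h))⟩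

theorem exists_mul_order_add_lt {v : Fin (m + 1) → LaurentSeries L} (hv : v ≠ 0) :
    ∃ j, v j ≠ 0 ∧ ∀ i ≠ j, v i ≠ 0 →
      (m + 1 : ℤ) * (v j).order + (j : ℕ) < (m + 1 : ℤ) * (v i).order + (i : ℕ) := by
  classical
  have hsupp : ({j | v j ≠ 0} : Finset (Fin (m + 1))).Nonempty := by
    obtain ⟨j, hj⟩ := Function.ne_iff.1 hv
    exact ⟨j, by simpa using hj⟩
  obtain ⟨j, hj, hmin⟩ := Finset.exists_min_image _
    (fun j => (m + 1 : ℤ) * (v j).order + (j : ℕ)) hsupp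
  refine ⟨j, by simpa using hj, fun i hij hi => (hmin i (by simpa using hi)).lt_of_ne fun h => ?_⟩
  have hmod := congrArg (· % (m + 1 : ℤ)) h
  simp only [Int.mul_add_emod_self_left] at hmod
  rw [Int.emod_eq_of_lt (by omega) (by omega), Int.emod_eq_of_lt (by omega) (by omega)] at hmod
  exact hij (Fin.ext (by omega))

theorem mulVec_ne_zero_of_mem_cyclicAlgebra (hX : X ∈ cyclicAlgebra σ m) (hX0 : X ≠ 0)
    {v : Fin (m + 1) → LaurentSeries L} (hv : v ≠ 0) : X *ᵥ v ≠ 0 := by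
  obtain ⟨j, hvj, hvmin⟩ := exists_mul_order_add_lt hv
  obtain ⟨i, hXij, hXmin⟩ := exists_conjOrder_le σ hX hX0 j
  refine Function.ne_iff.2 ⟨i, ?_⟩
  refine hahnSeries_sum_ne_zero (Finset.mem_univ j) (mul_ne_zero hXij hvj) fun l _ hlj hl => ?_
  have hXil := left_ne_zero_of_mul hl
  have hvl := right_ne_zero_of_mul hl
  rw [HahnSeries.order_mul hXij hvj, HahnSeries.order_mul hXil hvl]
  have hXle := hXmin i l hXil
  unfold conjOrder at hXle
  have hvlt := hvmin l hlj hvl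
  have hm : (0 : ℤ) < m + 1 := by positivity
  exact lt_of_mul_lt_mul_left (by linarith) hm.le

theorem isUnit_cyclicAlgebra (x : cyclicAlgebra σ m) (hx : x ≠ 0) : IsUnit x := by
  have hdet : IsUnit (x : Matrix (Fin (m + 1)) (Fin (m + 1)) (LaurentSeries L)).det := by
    rw [isUnit_iff_ne_zero]
    intro hdet
    obtain ⟨v, hv, hxv⟩ := Matrix.exists_mulVec_eq_zero_iff.2 hdet
    exact mulVec_ne_zero_of_mem_cyclicAlgebra σ x.2 (Subtype.coe_ne_coe.2 hx) hv hxv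
  have hmul := Matrix.mul_nonsing_inv _ hdet
  have hmul' := Matrix.nonsing_inv_mul _ hdet
  exact isUnit_iff_exists.2 ⟨⟨_, mem_twistedCentralizer_of_mul_eq_one x.2 hmul hmul'⟩,
    Subtype.ext hmul, Subtype.ext hmul'⟩

end LaurentShift

open MvPolynomial in
theorem exists_divisionRing_span_range_eq_top.{u} (F : Type u) [Field F] (m : ℕ) :
    ∃ (K : Type u) (_ : Field K) (_ : Algebra F K) (D : Type u) (_ : DivisionRing D)
      (_ : Algebra F D) (φ : D →ₐ[F] Matrix (Fin (m + 1)) (Fin (m + 1)) K),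
      Submodule.span K (Set.range φ) = ⊤ := by
  let P := MvPolynomial (Fin (m + 1)) F
  let L := FractionRing P
  let s : P →ₐ[F] P := rename (· - 1)
  have hs : Function.Injective ((IsScalarTower.toAlgHom F P L).comp s) :=
    (IsFractionRing.injective P L).comp (rename_injective _ (sub_left_injective))
  let σ : L →ₐ[F] L := IsFractionRing.liftAlgHom hs
  let y (i : Fin (m + 1)) : LaurentSeries L := HahnSeries.single 0 (algebraMap P L (X i))
  have hy : Function.Injective y := (HahnSeries.single_injective 0).comp
    ((IsFractionRing.injective P L).comp X_injective)
  have hyσ (i : Fin (m + 1)) : laurentMap σ (y (i + 1)) = y i := by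
    rw [laurentMap_single]
    refine congrArg _ ((IsFractionRing.lift_algebraMap hs _).trans ?_)
    exact congrArg (algebraMap P L) ((rename_X _ _).trans (by rw [add_sub_cancel_right]))
  let _ : DivisionRing (cyclicAlgebra σ m) := DivisionRing.ofIsUnitOrEqZero fun x =>
    (em (x = 0)).symm.imp_left (isUnit_cyclicAlgebra σ x)
  refine ⟨LaurentSeries L, inferInstance, inferInstance, cyclicAlgebra σ m, inferInstance,
    inferInstance, (cyclicAlgebra σ m).val, ?_⟩
  rw [Subalgebra.coe_val, Subtype.range_coe]
  exact span_eq_top_of_adjoin_eq_top (S := (cyclicAlgebra σ m).toSubmonoid)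
    (adjoin_cyclicAlgebra σ hy hyσ)

section ExtensionOfScalars

variable {F K m n k l : Type*} [Field F] [Field K] [Algebra F K]

theorem span_range_map_algebraMap [Finite k] [Finite l] :
    Submodule.span K (Set.range fun T : Matrix k l F => T.map (algebraMap F K)) = ⊤ := by
  classical
  cases nonempty_fintype k
  cases nonempty_fintype l
  refine eq_top_iff.2 fun T _ => ?_
  rw [matrix_eq_sum_single T]
  refine sum_mem fun i _ => sum_mem fun j _ => ?_
  have hsingle : single i j (T i j) = T i j • (single i j (1 : F)).map (algebraMap F K) := by
    rw [map_single, map_one, smul_single, smul_eq_mul, mul_one]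
  rw [hsingle]
  exact Submodule.smul_mem _ _ (Submodule.subset_span ⟨_, rfl⟩)

theorem dvd_rank_of_mem_span_kronecker {D : Type*} [DivisionRing D] [Algebra F D] [Finite m]
    [Fintype n] [Fintype k] [DecidableEq k] (φ : D →ₐ[F] Matrix k k K)
    {B : Submodule F (Matrix m n F)} {N : Matrix (m × k) (n × k) K}
    (hN : N ∈ Submodule.span F (Set.image2 (· ⊗ₖ ·)
      (B.map (Algebra.linearMap F K).mapMatrix : Set (Matrix m n K)) (Set.range φ))) :
    Fintype.card k ∣ N.rank := by
  let Ψ : Matrix m n D →ₗ[F] Matrix (m × k) (n × k) K :=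
    (compLinearEquiv m n k k K F).toLinearMap ∘ₗ φ.toLinearMap.mapMatrix
  have hle : Submodule.span F (Set.image2 (· ⊗ₖ ·)
      (B.map (Algebra.linearMap F K).mapMatrix : Set (Matrix m n K)) (Set.range φ)) ≤
        LinearMap.range Ψ := by
    rw [Submodule.span_le]
    rintro _ ⟨_, ⟨A, -, rfl⟩, _, ⟨T, rfl⟩, rfl⟩
    refine ⟨Matrix.of fun i j => A i j • T, ?_⟩
    ext i j
    simp [Ψ, kroneckerMap_apply, ← Algebra.smul_def]
  obtain ⟨X, rfl⟩ := hle hN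
  exact card_dvd_rank_comp_map (φ : D →+* Matrix k k K) X

end ExtensionOfScalars

section Regularity

variable {F : Type} [Field F] {n k l : ℕ} (B : Submodule F (Matrix (Fin n) (Fin n) F))

theorem blowUp_eq_span_image2 :
    blowUp B k l = Submodule.span F (Set.image2 (· ⊗ₖ ·) B Set.univ) :=
  congrArg _ (Set.ext fun M => by simp [Set.mem_image2, eq_comm])

variable {K : Type*} [Field K] [Algebra F K]

theorem map_blowUp :
    (blowUp B k l).map (Algebra.linearMap F K).mapMatrix =
      Submodule.span F (Set.image2 (· ⊗ₖ ·) (B.map (Algebra.linearMap F K).mapMatrix)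
        (Set.range fun T : Matrix (Fin k) (Fin l) F => T.map (algebraMap F K))) := by
  rw [blowUp_eq_span_image2, Submodule.map_span, ← Set.image_univ, Submodule.map_coe]
  refine congrArg _ (Set.image_image2_distrib fun A T => ?_)
  ext
  simp [kroneckerMap_apply]

theorem span_map_blowUp {S : Set (Matrix (Fin k) (Fin l) K)} (hS : Submodule.span K S = ⊤) :
    Submodule.span K ((blowUp B k l).map (Algebra.linearMap F K).mapMatrix : Set _) =
      Submodule.span K (Set.image2 (· ⊗ₖ ·)
        (B.map (Algebra.linearMap F K).mapMatrix : Set (Matrix (Fin n) (Fin n) K)) S) := by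
  have hspan {S : Set (Matrix (Fin k) (Fin l) K)} (hS : Submodule.span K S = ⊤) :
      Submodule.span K (Set.image2 (· ⊗ₖ ·)
          (B.map (Algebra.linearMap F K).mapMatrix : Set (Matrix (Fin n) (Fin n) K)) S) =
        Submodule.map₂ (kroneckerBilinear (R := K))
          (Submodule.span K (B.map (Algebra.linearMap F K).mapMatrix :
            Set (Matrix (Fin n) (Fin n) K))) ⊤ := by
    rw [← hS, Submodule.map₂_span_span]
    rfl
  rw [map_blowUp, Submodule.span_span_of_tower, hspan hS, hspan span_range_map_algebraMap]

variable {B}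

theorem exists_mem_blowUp_succ_mul_le_rank {r : ℕ} (hk : 0 < k)
    (hF : ((n * k : ℕ) : Cardinal) < Cardinal.mk F) {M : Matrix (Fin n × Fin k) (Fin n × Fin k) F}
    (hM : M ∈ blowUp B k k) (hr : r * k < M.rank) :
    ∃ M' ∈ blowUp B k k, (r + 1) * k ≤ M'.rank := by
  obtain ⟨m, rfl⟩ := Nat.exists_eq_add_one_of_ne_zero hk.ne'
  obtain ⟨K, _, _, D, _, _, φ, hφ⟩ := exists_divisionRing_span_range_eq_top F m
  have hcard (X : Matrix (Fin n × Fin (m + 1)) (Fin n × Fin (m + 1)) K) :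
      (X.rank : Cardinal) < Cardinal.mk F :=
    (Nat.cast_le.2 ((rank_le_card_width X).trans_eq (by simp))).trans_lt hF
  have hspan := span_map_blowUp B hφ
  obtain ⟨N, hN, hMN⟩ := exists_mem_span_le_rank (hcard _)
    (hspan ▸ Submodule.subset_span (Set.mem_image_of_mem _ hM)) le_rfl
  replace hMN : M.rank ≤ N.rank := (rank_map_ringHom (algebraMap F K) M).symm.trans_le hMN
  have hrank : (r + 1) * (m + 1) ≤ N.rank := by
    obtain ⟨c, hc⟩ := dvd_rank_of_mem_span_kronecker φ hN
    rw [hc, Fintype.card_fin, mul_comm] at hMN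
    rw [hc, Fintype.card_fin, mul_comm]
    exact Nat.mul_le_mul_left _ (Nat.lt_of_mul_lt_mul_right (hr.trans_le hMN))
  obtain ⟨M', hM', hNM'⟩ := exists_mem_le_rank_of_mem_span_map (hcard N)
    (hspan ▸ Submodule.span_le_restrictScalars F K _ hN)
  exact ⟨M', hM', hrank.trans hNM'⟩

end Regularity

section Slices

variable {F m n p : Type*} [Field F]

variable (F m) in
/-- The component at `c` of a vector of `F^m ⊗ F^p`, modelled as `m × p → F`. -/
def slice (c : p) : (m × p → F) →ₗ[F] (m → F) :=
  LinearMap.funLeft F F (·, c)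

variable (F m) in
/-- The embedding `w ↦ w ⊗ e_c` of `F^m` into `F^m ⊗ F^p`, a section of `slice F m c`. -/
def sliceSingle [DecidableEq p] (c : p) : (m → F) →ₗ[F] (m × p → F) where
  toFun w x := Pi.single (M := fun _ => F) c (w x.1) x.2
  map_add' v w := funext fun x => by rw [Pi.add_apply, Pi.single_add]; rfl
  map_smul' t w := funext fun x => by rw [Pi.smul_apply, Pi.single_smul]; rfl

/-- The span of the slices of the vectors in `V`: the least `W` with `V ≤ W ⊗ F^p`. -/
def sliceSpan (V : Submodule F (m × p → F)) : Submodule F (m → F) :=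
  ⨆ c, V.map (slice F m c)

variable (p) in
/-- The subspace `W ⊗ F^p` of `F^m ⊗ F^p`: the vectors all of whose slices lie in `W`. -/
def sliceLift (W : Submodule F (m → F)) : Submodule F (m × p → F) :=
  ⨅ c, W.comap (slice F m c)

theorem slice_ext {v w : m × p → F} (h : ∀ c, slice F m c v = slice F m c w) : v = w :=
  funext fun x => congrFun (h x.2) x.1

theorem slice_sliceSingle [DecidableEq p] (c c' : p) (w : m → F) :
    slice F m c (sliceSingle F m c' w) = (Pi.single c' w : p → m → F) c := by
  ext a
  obtain rfl | hc := eq_or_ne c c' <;> simp [slice, sliceSingle, *]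

theorem sum_sliceSingle_slice [Fintype p] [DecidableEq p] (v : m × p → F) :
    ∑ c, sliceSingle F m c (slice F m c v) = v := by
  ext x
  simp [sliceSingle, slice]

theorem mem_sliceLift {W : Submodule F (m → F)} {v : m × p → F} :
    v ∈ sliceLift p W ↔ ∀ c, slice F m c v ∈ W := by
  simp [sliceLift]

theorem le_sliceLift_sliceSpan (V : Submodule F (m × p → F)) : V ≤ sliceLift p (sliceSpan V) :=
  fun _ hv => mem_sliceLift.2 fun c => le_iSup (fun c => V.map (slice F m c)) c ⟨_, hv, rfl⟩

theorem finrank_sliceLift [Finite m] [Fintype p] (W : Submodule F (m → F)) :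
    Module.finrank F (sliceLift p W) = Fintype.card p * Module.finrank F W := by
  let e : sliceLift p W ≃ₗ[F] (p → W) :=
    { toFun := fun v c => ⟨slice F m c v, mem_sliceLift.1 v.2 c⟩
      map_add' := fun _ _ => rfl
      map_smul' := fun _ _ => rfl
      invFun := fun w => ⟨fun x => (w x.2).1 x.1, mem_sliceLift.2 fun c => (w c).2⟩
      left_inv := fun _ => rfl
      right_inv := fun _ => rfl }
  rw [e.finrank_eq, Module.finrank_pi_fintype, Finset.sum_const, Finset.card_univ, smul_eq_mul]

section Kronecker

variable [Fintype n] [Fintype p]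

theorem slice_kronecker_mulVec {q : Type*} (A : Matrix m n F) (T : Matrix q p F) (v : n × p → F)
    (c : q) :
    slice F m c ((A ⊗ₖ T) *ᵥ v) = A *ᵥ ∑ c', T c c' • slice F n c' v := by
  ext a
  simp [slice, mulVec, dotProduct, Fintype.sum_prod_type, Finset.mul_sum, mul_assoc]

variable [DecidableEq p]

theorem slice_kronecker_one_mulVec (A : Matrix m n F) (v : n × p → F) (c : p) :
    slice F m c ((A ⊗ₖ (1 : Matrix p p F)) *ᵥ v) = A *ᵥ slice F n c v := by
  simp [slice_kronecker_mulVec, Matrix.one_apply]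

theorem kronecker_one_mulVec_sliceSingle (A : Matrix m n F) (c : p) (w : n → F) :
    (A ⊗ₖ (1 : Matrix p p F)) *ᵥ sliceSingle F n c w = sliceSingle F m c (A *ᵥ w) := by
  refine slice_ext fun b => ?_
  rw [slice_kronecker_one_mulVec, slice_sliceSingle, slice_sliceSingle]
  obtain rfl | hb := eq_or_ne b c <;> simp [*]

theorem kronecker_single_mulVec (A : Matrix m n F) (c c' : p) (v : n × p → F) :
    (A ⊗ₖ single c c' (1 : F)) *ᵥ v = sliceSingle F m c (A *ᵥ slice F n c' v) := by
  refine slice_ext fun b => ?_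
  rw [slice_kronecker_mulVec, slice_sliceSingle]
  obtain rfl | hb := eq_or_ne b c
  · simp [single_apply]
  · simp [hb, hb.symm]

end Kronecker

/-- The subspace `B(U)` spanned by the images of the vectors in `U` under the matrices in `B`. -/
abbrev imageSpan [Fintype n] (B : Submodule F (Matrix m n F)) (U : Submodule F (n → F)) :
    Submodule F (m → F) :=
  Submodule.map₂ (mulVecBilin F F) B U

end Slices

section BlowUp

variable {F : Type} [Field F] {n d : ℕ} {B : Submodule F (Matrix (Fin n) (Fin n) F)}

theorem isShrunkSubspace_iff {U : Submodule F (Fin n → F)} {s : ℕ} :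
    IsShrunkSubspace B U s ↔ Module.finrank F (imageSpan B U) + s ≤ Module.finrank F U := by
  have himage : {v | ∃ A ∈ B, ∃ u ∈ U, v = A *ᵥ u} =
      Set.image2 (mulVecBilin F F · ·) (B : Set (Matrix (Fin n) (Fin n) F)) U := by
    ext
    simp [Set.mem_image2, eq_comm]
  rw [imageSpan, Submodule.map₂_eq_span_image2, ← himage, IsShrunkSubspace]

theorem imageSpan_blowUp (V : Submodule F (Fin n × Fin d → F)) :
    imageSpan (blowUp B d d) V = sliceLift (Fin d) (imageSpan B (sliceSpan V)) := by
  apply le_antisymm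
  · refine Submodule.map₂_le.2 fun C hC v hv => mem_sliceLift.2 fun c => ?_
    have hle : blowUp B d d ≤ (imageSpan B (sliceSpan V)).comap
        (slice F (Fin n) c ∘ₗ (mulVecBilin F F).flip v) := by
      refine Submodule.span_le.2 ?_
      rintro _ ⟨A, hA, T, rfl⟩
      rw [SetLike.mem_coe, Submodule.mem_comap, LinearMap.comp_apply, LinearMap.flip_apply,
        mulVecBilin_apply, slice_kronecker_mulVec]
      exact Submodule.apply_mem_map₂ _ hA <| sum_mem fun c' _ =>
        Submodule.smul_mem _ _ (mem_sliceLift.1 (le_sliceLift_sliceSpan V hv) c')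
    exact hle hC
  · intro w hw
    rw [← sum_sliceSingle_slice w]
    refine sum_mem fun c _ => ?_
    have hle : imageSpan B (sliceSpan V) ≤
        (imageSpan (blowUp B d d) V).comap (sliceSingle F (Fin n) c) := by
      refine Submodule.map₂_le.2 fun A hA u hu => ?_
      have hslice : sliceSpan V ≤ (imageSpan (blowUp B d d) V).comap
          (sliceSingle F (Fin n) c ∘ₗ A.mulVecLin) := by
        refine iSup_le fun c' => Submodule.map_le_iff_le_comap.2 fun v hv => ?_
        rw [Submodule.mem_comap, Submodule.mem_comap, LinearMap.comp_apply, mulVecLin_apply,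
          ← kronecker_single_mulVec]
        exact Submodule.apply_mem_map₂ _ (Submodule.subset_span ⟨A, hA, _, rfl⟩) hv
      exact hslice hu
    exact hle (mem_sliceLift.1 hw c)

end BlowUp

section WongSequence

variable {F m n : Type*} [Field F] [Fintype n] {A : Matrix m n F} {V : Submodule F (Matrix m n F)}

/-- The vectors `x 0, …, x j` form a chain of length `j` for `A` along the matrices `C`: they start
in `ker A` and satisfy `x (l + 1) ∈ A⁻¹ (C l (x l))`. -/
def IsWongChain (A : Matrix m n F) (C : ℕ → Matrix m n F) (x : ℕ → n → F) (j : ℕ) : Prop :=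
  A *ᵥ x 0 = 0 ∧ ∀ l < j, A *ᵥ x (l + 1) = C l *ᵥ x l

/-- The span of the end points of the chains of length `j` along matrices of `V`. As long as these
chains can be prolonged, `wongSpace A V (j + 1)` is the preimage under `A` of `V` applied to
`wongSpace A V j`, which is the second Wong sequence of `A` and `V`. -/
def wongSpace (A : Matrix m n F) (V : Submodule F (Matrix m n F)) (j : ℕ) : Submodule F (n → F) :=
  Submodule.span F {y | ∃ C x, (∀ l, C l ∈ V) ∧ IsWongChain A C x j ∧ x j = y}

namespace IsWongChain

variable {C : ℕ → Matrix m n F} {x : ℕ → n → F} {j : ℕ}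

theorem cons (h : IsWongChain A C x j) :
    IsWongChain A (fun | 0 => 0 | l + 1 => C l) (fun | 0 => 0 | l + 1 => x l) (j + 1) := by
  refine ⟨mulVec_zero A, fun l hl => ?_⟩
  cases l with
  | zero => exact h.1.trans (zero_mulVec _).symm
  | succ l => exact h.2 l (Nat.lt_of_succ_lt_succ hl)

theorem update_matrix (h : IsWongChain A C x j) (D : Matrix m n F) :
    IsWongChain A (Function.update C j D) x j :=
  ⟨h.1, fun l hl => by rw [Function.update_of_ne hl.ne, h.2 l hl]⟩

theorem snoc (h : IsWongChain A C x j) {y : n → F} (hy : A *ᵥ y = C j *ᵥ x j) :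
    IsWongChain A C (Function.update x (j + 1) y) (j + 1) := by
  refine ⟨?_, fun l hl => ?_⟩
  · rw [Function.update_of_ne (Nat.succ_ne_zero j).symm]
    exact h.1
  · rw [Function.update_of_ne hl.ne]
    obtain rfl | hlt := Nat.eq_or_lt_of_le (Nat.le_of_lt_succ hl)
    · rwa [Function.update_self]
    · rw [Function.update_of_ne (Nat.succ_ne_succ_iff.2 hlt.ne)]
      exact h.2 l hlt

end IsWongChain

theorem wongSpace_mono : Monotone (wongSpace A V) := by
  refine monotone_nat_of_le_succ fun j => Submodule.span_mono ?_
  rintro _ ⟨C, x, hC, hx, rfl⟩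
  refine ⟨_, _, fun l => ?_, hx.cons, rfl⟩
  cases l with
  | zero => exact zero_mem V
  | succ l => exact hC l

theorem ker_le_wongSpace (j : ℕ) : LinearMap.ker A.mulVecLin ≤ wongSpace A V j :=
  (show _ ≤ wongSpace A V 0 from fun y hy =>
    Submodule.subset_span ⟨0, fun _ => y, fun _ => zero_mem V, ⟨hy, by simp⟩, rfl⟩).trans
    (wongSpace_mono (Nat.zero_le j))

theorem imageSpan_wongSpace_le_iff {j : ℕ} {W : Submodule F (m → F)} :
    imageSpan V (wongSpace A V j) ≤ W ↔
      ∀ C x, (∀ l, C l ∈ V) → IsWongChain A C x j → C j *ᵥ x j ∈ W := by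
  refine ⟨fun h C x hC hx => h (Submodule.apply_mem_map₂ _ (hC j)
    (Submodule.subset_span ⟨C, x, hC, hx, rfl⟩)), fun h => ?_⟩
  refine Submodule.map₂_le.2 fun D hD v hv => ?_
  have hle : wongSpace A V j ≤ W.comap D.mulVecLin := by
    refine Submodule.span_le.2 ?_
    rintro _ ⟨C, x, hC, hx, rfl⟩
    have hDx := h _ x (fun l => ?_) (hx.update_matrix D)
    · rwa [Function.update_self] at hDx
    · obtain rfl | hl := eq_or_ne l j
      · rwa [Function.update_self]
      · rw [Function.update_of_ne hl]
        exact hC l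
  exact hle hv

theorem map_wongSpace_succ {j : ℕ}
    (h : imageSpan V (wongSpace A V j) ≤ LinearMap.range A.mulVecLin) :
    (wongSpace A V (j + 1)).map A.mulVecLin = imageSpan V (wongSpace A V j) := by
  apply le_antisymm
  · rw [wongSpace, Submodule.map_span_le]
    rintro _ ⟨C, x, hC, hx, rfl⟩
    rw [mulVecLin_apply, hx.2 j j.lt_succ_self]
    exact imageSpan_wongSpace_le_iff.1 le_rfl C x hC
      ⟨hx.1, fun l hl => hx.2 l (hl.trans j.lt_succ_self)⟩
  · refine imageSpan_wongSpace_le_iff.2 fun C x hC hx => ?_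
    obtain ⟨y, hy⟩ := imageSpan_wongSpace_le_iff.1 h C x hC hx
    exact ⟨y, Submodule.subset_span ⟨C, _, hC, hx.snoc hy, Function.update_self ..⟩, hy⟩

end WongSequence

section ShrunkSubspace

theorem exists_eq_succ_of_dvd {f : ℕ → ℕ} {d r : ℕ} (hf : Monotone f)
    (hd : ∀ i ≤ r, d ∣ f (i + 1)) (hr : f (r + 1) < (r + 1) * d) : ∃ i ≤ r, f i = f (i + 1) := by
  by_contra! hne
  have hgrow : ∀ i ≤ r + 1, i * d ≤ f i := by
    intro i
    induction i with
    | zero => simp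
    | succ i ih =>
      intro hi
      have hlt : i * d < f (i + 1) :=
        (ih (by lia)).trans_lt ((hf i.le_succ).lt_of_ne (hne i (by lia)))
      obtain ⟨c, hc⟩ := hd i (by lia)
      rw [hc, mul_comm d] at hlt ⊢
      exact Nat.mul_le_mul_right d (Nat.lt_of_mul_lt_mul_right hlt)
  exact hr.not_ge (hgrow (r + 1) le_rfl)

theorem finrank_map_add_finrank_ker_of_ker_le {K V W : Type*} [DivisionRing K] [AddCommGroup V]
    [Module K V] [AddCommGroup W] [Module K W] [FiniteDimensional K V] {f : V →ₗ[K] W}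
    {U : Submodule K V} (h : LinearMap.ker f ≤ U) :
    Module.finrank K (U.map f) + Module.finrank K (LinearMap.ker f) = Module.finrank K U := by
  rw [← LinearMap.range_domRestrict, ← (Submodule.comapSubtypeEquivOfLe h).finrank_eq]
  exact (f.domRestrict U).finrank_range_add_finrank_ker

variable {F : Type} [Field F] {n d r : ℕ} {B : Submodule F (Matrix (Fin n) (Fin n) F)}
  {A : Matrix (Fin n × Fin d) (Fin n × Fin d) F}

theorem isShrunkSubspace_sliceSpan (hd : 0 < d) (hA : A.rank = r * d)
    {U : Submodule F (Fin n × Fin d → F)} (hker : LinearMap.ker A.mulVecLin ≤ U)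
    (hU : U.map A.mulVecLin = imageSpan (blowUp B d d) U) :
    IsShrunkSubspace B (sliceSpan U) (n - r) := by
  have hdim := finrank_map_add_finrank_ker_of_ker_le hker
  have hlift := Submodule.finrank_mono (le_sliceLift_sliceSpan U)
  rw [hU, imageSpan_blowUp, finrank_sliceLift, Fintype.card_fin] at hdim
  rw [finrank_sliceLift, Fintype.card_fin] at hlift
  have hnull : A.rank + Module.finrank F (LinearMap.ker A.mulVecLin) = n * d := by
    rw [Matrix.rank, LinearMap.finrank_range_add_finrank_ker, Module.finrank_fintype_fun_eq_card,
      Fintype.card_prod, Fintype.card_fin, Fintype.card_fin]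
  rw [isShrunkSubspace_iff]
  refine Nat.le_of_mul_le_mul_left ?_ hd
  rw [mul_add, Nat.mul_sub, mul_comm d n, mul_comm d r, ← hnull, hA, Nat.add_sub_cancel_left]
  exact hdim.trans_le hlift

theorem exists_isShrunkSubspace (hd : 0 < d) (hA : A.rank = r * d)
    (h : ∀ j ≤ r, imageSpan (blowUp B d d) (wongSpace A (blowUp B d d) j) ≤
      LinearMap.range A.mulVecLin) :
    ∃ U : Submodule F (Fin n → F), IsShrunkSubspace B U (n - r) := by
  set U := wongSpace A (blowUp B d d)
  have hmap (j : ℕ) (hj : j ≤ r) : (U (j + 1)).map A.mulVecLin = imageSpan (blowUp B d d) (U j) :=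
    map_wongSpace_succ (h j hj)
  have hmono : Monotone fun j => (U j).map A.mulVecLin :=
    fun _ _ hij => Submodule.map_mono (wongSpace_mono hij)
  obtain ⟨j, hj, hfix⟩ : ∃ j ≤ r, Module.finrank F ((U j).map A.mulVecLin) =
      Module.finrank F ((U (j + 1)).map A.mulVecLin) := by
    refine exists_eq_succ_of_dvd (d := d) (fun _ _ hij => Submodule.finrank_mono (hmono hij))
      (fun j hj => ?_) ?_
    · rw [hmap j hj, imageSpan_blowUp, finrank_sliceLift, Fintype.card_fin]
      exact dvd_mul_right ..
    · calc Module.finrank F ((U (r + 1)).map A.mulVecLin) ≤ A.rank :=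
            Submodule.finrank_mono LinearMap.map_le_range
        _ = r * d := hA
        _ < (r + 1) * d := Nat.mul_lt_mul_of_pos_right r.lt_succ_self hd
  exact ⟨_, isShrunkSubspace_sliceSpan hd hA (ker_le_wongSpace j)
    ((Submodule.eq_of_le_of_finrank_eq (hmono j.le_succ) hfix).trans (hmap j hj))⟩

end ShrunkSubspace

section Pencil

variable {F m n : Type*} [Field F] [Fintype n]

theorem range_fromCols_replicateCol (X : Matrix m n F) (z : m → F) :
    LinearMap.range (fromCols X (replicateCol Unit z)).mulVecLin =
      LinearMap.range X.mulVecLin ⊔ F ∙ z := by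
  have hcol : (fromCols X (replicateCol Unit z)).col = Sum.elim X.col fun _ => z := by
    ext (k | k) <;> rfl
  rw [range_mulVecLin, range_mulVecLin, ← Submodule.span_union, hcol, Set.Sum.elim_range,
    Set.range_const]

theorem rank_fromCols_replicateCol_of_mem {X : Matrix m n F} {z : m → F}
    (hz : z ∈ LinearMap.range X.mulVecLin) :
    (fromCols X (replicateCol Unit z)).rank = X.rank := by
  rw [Matrix.rank, range_fromCols_replicateCol, sup_eq_left.2]
  · rfl
  · rwa [Submodule.span_singleton_le_iff_mem]

theorem rank_lt_rank_fromCols_replicateCol {X : Matrix m n F} {z : m → F}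
    (hz : z ∉ LinearMap.range X.mulVecLin) :
    X.rank < (fromCols X (replicateCol Unit z)).rank := by
  rw [Matrix.rank, Matrix.rank, range_fromCols_replicateCol]
  refine Submodule.finrank_lt_finrank_of_lt (lt_of_le_of_ne le_sup_left fun h => hz ?_)
  rw [h]
  exact Submodule.mem_sup_right (Submodule.mem_span_singleton_self z)

theorem IsWongChain.mulVec_mem_range_add_smul {A M : Matrix m n F} {x : ℕ → n → F} {j : ℕ}
    (h : IsWongChain A (fun _ => M) x j) {f : F} (hf : f ≠ 0) {l : ℕ} (hl : l ≤ j) :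
    M *ᵥ x l ∈ LinearMap.range (A + f • M).mulVecLin := by
  have hx (y : n → F) : f • (M *ᵥ y) = (A + f • M).mulVecLin y - A *ᵥ y := by
    rw [mulVecLin_apply, add_mulVec, smul_mulVec, add_sub_cancel_left]
  refine (Submodule.smul_mem_iff _ hf).1 ((hx (x l)).symm ▸ sub_mem ⟨_, rfl⟩ ?_)
  cases l with
  | zero => exact h.1 ▸ zero_mem _
  | succ l => exact h.2 l hl ▸ h.mulVec_mem_range_add_smul hf (Nat.le_of_succ_le hl)

theorem IsWongChain.exists_rank_lt_rank_add_smul [Finite m] {A M : Matrix m n F}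
    {x : ℕ → n → F} {j : ℕ} (h : IsWongChain A (fun _ => M) x j)
    (hM : M *ᵥ x j ∉ LinearMap.range A.mulVecLin)
    (hF : ((A.rank + 3 : ℕ) : Cardinal) ≤ Cardinal.mk F) :
    ∃ f : F, A.rank < (A + f • M).rank := by
  classical
  obtain ⟨s, hs⟩ := Cardinal.exists_finset_eq_card hF
  have haug (f : F) : fromCols A (replicateCol Unit (M *ᵥ x j)) +
      f • fromCols M (0 : Matrix m Unit F) =
        fromCols (A + f • M) (replicateCol Unit (M *ᵥ x j)) := by
    ext i (k | k) <;> simp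
  have hrank := rank_lt_rank_fromCols_replicateCol hM
  obtain ⟨f, hfs, hf⟩ := exists_mem_le_rank_add_smul (s := s.erase 0) (t := 0)
    (B := fromCols M (0 : Matrix m Unit F)) (R := A.rank + 1) (by rwa [zero_smul, add_zero])
    (by have := Finset.pred_card_le_card_erase (s := s) (a := 0); lia)
  rw [haug, rank_fromCols_replicateCol_of_mem
    (h.mulVec_mem_range_add_smul (Finset.ne_of_mem_erase hfs) le_rfl)] at hf
  exact ⟨f, hf⟩

end Pencil

section ShiftPencil

open scoped Fin.CommRing

variable {F m n : Type*} [Field F] [Fintype n] {e : ℕ}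

/-- The matrix `∑ q, C q ⊗ E_{q+1,q}`, which applies `C q` to the slice with index `q` while
shifting the slices cyclically. -/
def shiftSum (e : ℕ) (C : ℕ → Matrix m n F) : Matrix (m × Fin (e + 1)) (n × Fin (e + 1)) F :=
  ∑ q : Fin (e + 1), C q ⊗ₖ single (q + 1) q 1

theorem shiftSum_mulVec_sliceSingle (C : ℕ → Matrix m n F) (q : Fin (e + 1)) (u : n → F) :
    shiftSum e C *ᵥ sliceSingle F n q u = sliceSingle F m (q + 1) (C q *ᵥ u) := by
  rw [shiftSum, Matrix.sum_mulVec, Finset.sum_eq_single q]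
  · rw [kronecker_single_mulVec, slice_sliceSingle, Pi.single_eq_same]
  · intro b _ hb
    rw [kronecker_single_mulVec, slice_sliceSingle, Pi.single_eq_of_ne hb, mulVec_zero, map_zero]
  · simp

variable {A : Matrix m n F} {C : ℕ → Matrix m n F} {x : ℕ → n → F} {j : ℕ}

theorem shiftSum_mulVec_sliceSingle_natCast (hj : j < e + 1) (u : n → F) :
    shiftSum e C *ᵥ sliceSingle F n (j : Fin (e + 1)) u =
      sliceSingle F m ((j + 1 : ℕ) : Fin (e + 1)) (C j *ᵥ u) := by
  rw [shiftSum_mulVec_sliceSingle, Fin.val_cast_of_lt hj, Nat.cast_succ]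

theorem IsWongChain.shiftSum (h : IsWongChain A C x j) (hj : j < e + 1) :
    IsWongChain (A ⊗ₖ (1 : Matrix (Fin (e + 1)) (Fin (e + 1)) F)) (fun _ => shiftSum e C)
      (fun l => sliceSingle F n (l : Fin (e + 1)) (x l)) j := by
  refine ⟨?_, fun l hl => ?_⟩
  · rw [kronecker_one_mulVec_sliceSingle, h.1, map_zero]
  · rw [kronecker_one_mulVec_sliceSingle, h.2 l hl,
      shiftSum_mulVec_sliceSingle_natCast (hl.trans hj)]

theorem shiftSum_mulVec_notMem_range (hj : j < e + 1)
    (hx : C j *ᵥ x j ∉ LinearMap.range A.mulVecLin) :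
    shiftSum e C *ᵥ sliceSingle F n (j : Fin (e + 1)) (x j) ∉
      LinearMap.range (A ⊗ₖ (1 : Matrix (Fin (e + 1)) (Fin (e + 1)) F)).mulVecLin := by
  rintro ⟨v, hv⟩
  refine hx ⟨slice F n ((j + 1 : ℕ) : Fin (e + 1)) v, ?_⟩
  rw [mulVecLin_apply, shiftSum_mulVec_sliceSingle_natCast hj] at hv
  rw [mulVecLin_apply, ← slice_kronecker_one_mulVec, hv, slice_sliceSingle, Pi.single_eq_same]

end ShiftPencil

section IteratedBlowUp

variable {F : Type} [Field F] {n d e : ℕ} {B : Submodule F (Matrix (Fin n) (Fin n) F)}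

theorem reindex_kronecker_mem_blowUp {d' : ℕ} {C : Matrix (Fin n × Fin d) (Fin n × Fin d) F}
    (hC : C ∈ blowUp B d d) (S : Matrix (Fin d') (Fin d') F) :
    (C ⊗ₖ S).reindex
        ((Equiv.prodAssoc _ _ _).trans ((Equiv.refl _).prodCongr finProdFinEquiv))
        ((Equiv.prodAssoc _ _ _).trans ((Equiv.refl _).prodCongr finProdFinEquiv)) ∈
      blowUp B (d * d') (d * d') := by
  induction hC using Submodule.span_induction with
  | mem C hC =>
    obtain ⟨A, hA, T, rfl⟩ := hC
    refine Submodule.subset_span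
      ⟨A, hA, (T ⊗ₖ S).reindex finProdFinEquiv finProdFinEquiv, ?_⟩
    ext x y
    simp [mul_assoc]
  | zero => simp
  | add C C' _ _ h h' =>
    rw [add_kronecker]
    exact add_mem h h'
  | smul t C _ h =>
    rw [smul_kronecker]
    exact Submodule.smul_mem _ t h

theorem exists_mem_blowUp_mul_rank_lt {A : Matrix (Fin n × Fin d) (Fin n × Fin d) F}
    (hA : A ∈ blowUp B d d) {C : ℕ → Matrix (Fin n × Fin d) (Fin n × Fin d) F}
    (hC : ∀ l, C l ∈ blowUp B d d) {x : ℕ → Fin n × Fin d → F} {j : ℕ}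
    (hx : IsWongChain A C x j) (hj : j < e + 1) (hne : C j *ᵥ x j ∉ LinearMap.range A.mulVecLin)
    (hF : ((A.rank * (e + 1) + 3 : ℕ) : Cardinal) ≤ Cardinal.mk F) :
    ∃ M ∈ blowUp B (d * (e + 1)) (d * (e + 1)), A.rank * (e + 1) < M.rank := by
  have hrank : (A ⊗ₖ (1 : Matrix (Fin (e + 1)) (Fin (e + 1)) F)).rank = A.rank * (e + 1) := by
    rw [rank_kronecker_one, Fintype.card_fin]
  obtain ⟨f, hf⟩ := (hx.shiftSum hj).exists_rank_lt_rank_add_smul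
    (shiftSum_mulVec_notMem_range hj hne) (by rwa [hrank])
  refine ⟨_, ?_, hrank ▸ hf.trans_eq (rank_reindex
    ((Equiv.prodAssoc _ _ _).trans ((Equiv.refl _).prodCongr finProdFinEquiv))
    ((Equiv.prodAssoc _ _ _).trans ((Equiv.refl _).prodCongr finProdFinEquiv)) _).symm⟩
  rw [← coe_reindexLinearEquiv F F, map_add, map_smul, shiftSum, map_sum]
  exact add_mem (reindex_kronecker_mem_blowUp hA 1) (Submodule.smul_mem _ _
    (sum_mem fun q _ => reindex_kronecker_mem_blowUp (hC q) _))

end IteratedBlowUp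

/-- Blow-up rank increment dichotomy: for all positive `n, d, d′` there is `N` such that
over any field `F` with `|F| ≥ N`, if `r < d′` and the `(d,d)`-blow-up of `B ≤ M(n,F)`
contains a matrix of rank `r·d`, then either `B` has an `(n − r)`-shrunk subspace, or the
`(dd′,dd′)`-blow-up contains a matrix of rank at least `(r+1)·d·d′`. -/
theorem stmt11 (n d d' : ℕ) (hn : 0 < n) (hd : 0 < d) (hd' : 0 < d') :
    ∃ N : ℕ, ∀ (F : Type) (_ : Field F),
      (N : Cardinal) ≤ Cardinal.mk F →
      ∀ (B : Submodule F (Matrix (Fin n) (Fin n) F)) (r : ℕ), r < d' →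
        (∃ A ∈ blowUp B d d, A.rank = r * d) →
        (∃ U : Submodule F (Fin n → F), IsShrunkSubspace B U (n - r)) ∨
        (∃ M ∈ blowUp B (d * d') (d * d'), (r + 1) * (d * d') ≤ M.rank) := by
  refine ⟨n * (d * d') + 3, fun F _ hF B r hr ⟨A, hAB, hA⟩ => ?_⟩
  obtain ⟨e, rfl⟩ := Nat.exists_eq_add_one_of_ne_zero hd'.ne'
  have hrank : r * (d * (e + 1)) ≤ n * (d * (e + 1)) := by
    refine Nat.mul_le_mul_right _ (Nat.le_of_mul_le_mul_right ?_ hd)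
    simpa [hA] using A.rank_le_card_width
  have hcard {k : ℕ} (hk : k ≤ n * (d * (e + 1)) + 3) : (k : Cardinal) ≤ Cardinal.mk F :=
    (Nat.cast_le.2 hk).trans hF
  by_cases h : ∀ j ≤ r, imageSpan (blowUp B d d) (wongSpace A (blowUp B d d) j) ≤
      LinearMap.range A.mulVecLin
  · exact .inl (exists_isShrunkSubspace hd hA h)
  · push Not at h
    obtain ⟨j, hj, hne⟩ := h
    rw [imageSpan_wongSpace_le_iff] at hne
    push Not at hne
    obtain ⟨C, x, hC, hx, hne⟩ := hne
    obtain ⟨M, hM, hlt⟩ := exists_mem_blowUp_mul_rank_lt hAB hC hx (hj.trans_lt hr) hne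
      (hcard (by rw [hA, mul_assoc]; lia))
    exact .inr (exists_mem_blowUp_succ_mul_le_rank (by positivity)
      ((Nat.cast_lt.2 (by lia)).trans_le hF) hM (by rwa [hA, mul_assoc] at hlt))
end

section
/- Let N > n > 0 be integers and let r : {0, 1, …, N}² → ℤ be a function satisfying: 0 ≤ r(k,ℓ) ≤ min(k,ℓ)·n for all k, ℓ; r(k,0) = r(0,ℓ) = 0; (1) r(k,ℓ+1) ≥ r(k,ℓ) for 0 ≤ ℓ < N; (2) r(k+1,ℓ) ≥ r(k,ℓ) for 0 ≤ k < N; (3) 2·r(k,ℓ+1) ≥ r(k,ℓ) + r(k,ℓ+2) for 0 ≤ ℓ < N−1; (4) 2·r(k+1,ℓ) ≥ r(k,ℓ) + r(k+2,ℓ) for 0 ≤ k < N−1; (5) k divides r(k,k) for every k. Suppose moreover that r(1,1) > 1 and that there exists an integer d with n ≤ d + 1 ≤ N and r(d+1, d+1) = n(d+1). Then r(d,d) = nd. -/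
/-!
Suppose `r(d,d) < nd`, and write `r(d,d) = md`, so `m ≤ n - 1`. A concave sequence which is
nonnegative at `0` has nonincreasing ratios `f(k)/k`; applied to column `d + 1` and to row `d` this
gives `nd ≤ r(d,d+1) ≤ m(d+1)`. With `m < n ≤ d + 1` this leaves only the extremal case `m = d`,
`n = d + 1`. There row `d` still increases by `d` in its last step, so `r(d,1) ≤ d`, while row
`d + 1` gives `r(d+1,1) ≥ d + 1`. Thus column `1` increases by at least `1` in its last step, and
by concavity in each earlier step, which forces `r(1,1) ≤ 1`.
-/

/-- Concavity of the finite sequence `f 0, …, f M`, encoded as monotonicity of consecutive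
increments. Values of `f` beyond `M` are unconstrained. It is applied to the rows and columns of a
function on a grid. -/
def ConcaveUpTo {G : Type*} [AddCommGroup G] [LE G] (f : ℕ → G) (M : ℕ) : Prop :=
  ∀ i, i + 1 < M → f (i + 2) - f (i + 1) ≤ f (i + 1) - f i

namespace ConcaveUpTo

section OrderedGroup

variable {G : Type*} [AddCommGroup G] [PartialOrder G] {f : ℕ → G} {M : ℕ}

lemma increment_anti (hf : ConcaveUpTo f M) {i j : ℕ} (hij : i ≤ j) (hj : j < M) :
    f (j + 1) - f j ≤ f (i + 1) - f i := by
  induction j, hij using Nat.le_induction with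
  | base => exact le_rfl
  | succ j _ ih => exact (hf j hj).trans (ih (by omega))

variable [IsOrderedAddMonoid G]

lemma nsmul_increment_le_sub (hf : ConcaveUpTo f M) {a s : ℕ} (h : a + s < M) :
    s • (f (a + s + 1) - f (a + s)) ≤ f (a + s) - f a := by
  calc s • (f (a + s + 1) - f (a + s))
      = (Finset.range s).card • (f (a + s + 1) - f (a + s)) := by rw [Finset.card_range]
    _ ≤ ∑ i ∈ Finset.range s, (f (a + (i + 1)) - f (a + i)) :=
      Finset.card_nsmul_le_sum _ _ _ fun i hi =>
        hf.increment_anti (Nat.add_le_add_left (Finset.mem_range.mp hi).le a) h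
    _ = f (a + s) - f a := Finset.sum_range_sub (fun i => f (a + i)) s

lemma nsmul_apply_le_nsmul_apply (hf : ConcaveUpTo f M) (h0 : 0 ≤ f 0) {k l : ℕ} (hkl : k ≤ l)
    (hl : l ≤ M) : k • f l ≤ l • f k := by
  induction l, hkl using Nat.le_induction with
  | base => exact le_rfl
  | succ l hkl ih =>
    have hlast : k • (f (l + 1) - f l) ≤ f k := by
      calc k • (f (l + 1) - f l) ≤ k • (f (k + 1) - f k) :=
            nsmul_le_nsmul_right (hf.increment_anti hkl hl) k
        _ ≤ f k - f 0 := by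
            simpa only [zero_add] using hf.nsmul_increment_le_sub (a := 0) (by omega)
        _ ≤ f k := sub_le_self _ h0
    calc k • f (l + 1) = k • f l + k • (f (l + 1) - f l) := by rw [← nsmul_add, add_sub_cancel]
      _ ≤ l • f k + f k := add_le_add (ih (by omega)) hlast
      _ = (l + 1) • f k := (succ_nsmul _ _).symm

end OrderedGroup

section OrderedRing

variable {R : Type*} [CommRing R] [LinearOrder R] [IsStrictOrderedRing R] {f : ℕ → R} {M : ℕ}

lemma mul_le_apply_of_le (hf : ConcaveUpTo f M) (h0 : 0 ≤ f 0) {k l : ℕ} (hkl : k ≤ l)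
    (hl : l ≤ M) (hlpos : 0 < l) {x : R} (hx : x * l ≤ f l) : x * k ≤ f k := by
  refine le_of_mul_le_mul_left ?_ (Nat.cast_pos.mpr hlpos : (0 : R) < l)
  calc (l : R) * (x * k) = k * (x * l) := by ring
    _ ≤ k * f l := by gcongr
    _ ≤ l * f k := by simpa only [nsmul_eq_mul] using hf.nsmul_apply_le_nsmul_apply h0 hkl hl

lemma apply_le_mul_of_le (hf : ConcaveUpTo f M) (h0 : 0 ≤ f 0) {k l : ℕ} (hkl : k ≤ l)
    (hl : l ≤ M) (hkpos : 0 < k) {x : R} (hx : f k ≤ x * k) : f l ≤ x * l := by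
  refine le_of_mul_le_mul_left ?_ (Nat.cast_pos.mpr hkpos : (0 : R) < k)
  calc (k : R) * f l ≤ l * f k := by
        simpa only [nsmul_eq_mul] using hf.nsmul_apply_le_nsmul_apply h0 hkl hl
    _ ≤ l * (x * k) := by gcongr
    _ = k * (x * l) := by ring

lemma apply_one_le_of_le_increment (hf : ConcaveUpTo f M) {d : ℕ} (hd : 0 < d) (hdM : d < M)
    {x : R} (hx : x ≤ f (d + 1) - f d) : f 1 ≤ f d - (d - 1) * x := by
  obtain ⟨s, rfl⟩ := Nat.exists_eq_add_of_le (m := 1) hd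
  have hsum : s * (f (1 + s + 1) - f (1 + s)) ≤ f (1 + s) - f 1 := by
    simpa only [nsmul_eq_mul] using hf.nsmul_increment_le_sub (a := 1) hdM
  have hmul : (s : R) * x ≤ s * (f (1 + s + 1) - f (1 + s)) := by gcongr
  push_cast
  linarith

end OrderedRing

end ConcaveUpTo

lemma apply_one_one_le_one_of_concaveUpTo {R : Type*} [CommRing R] [LinearOrder R]
    [IsStrictOrderedRing R] {r : ℕ → ℕ → R} {d : ℕ} (hd : 0 < d)
    (hrow : ConcaveUpTo (r d) (d + 1)) (hrow_succ : ConcaveUpTo (r (d + 1)) (d + 1))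
    (hcol : ConcaveUpTo (fun k => r k 1) (d + 1)) (hrow_succ_zero : 0 ≤ r (d + 1) 0)
    (hdiag : r d d ≤ d * d) (hoff : (d + 1) * d ≤ r d (d + 1))
    (hdiag_succ : (d + 1) * (d + 1) ≤ r (d + 1) (d + 1)) : r 1 1 ≤ 1 := by
  have hrow_one : r d 1 ≤ d := by
    have hlast : (d : R) ≤ r d (d + 1) - r d d := by linarith
    linarith [hrow.apply_one_le_of_le_increment hd d.lt_succ_self hlast]
  have hrow_succ_one : (d : R) + 1 ≤ r (d + 1) 1 := by
    simpa only [Nat.cast_one, mul_one] using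
      hrow_succ.mul_le_apply_of_le hrow_succ_zero (Nat.succ_pos d) le_rfl d.succ_pos
        (by exact_mod_cast hdiag_succ)
  have hlast : 1 ≤ r (d + 1) 1 - r d 1 := by linarith
  linarith [hcol.apply_one_le_of_le_increment hd d.lt_succ_self hlast]

lemma eq_and_eq_add_one_of_mul_le_mul {d m n : ℤ} (hd : 0 ≤ d) (hmn : m < n) (hn : n ≤ d + 1)
    (h : n * d ≤ m * (d + 1)) : m = d ∧ n = d + 1 := by
  have hmul : m * (d + 1) ≤ (n - 1) * (d + 1) :=
    mul_le_mul_of_nonneg_right (by omega) (by omega)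
  have hn_eq : n = d + 1 := by linarith
  subst hn_eq
  have hdm : d ≤ m := le_of_mul_le_mul_left (by linarith) (by linarith : 0 < d + 1)
  exact ⟨by omega, rfl⟩

theorem stmt14_general (n : ℤ) (d : ℕ) (r : ℕ → ℕ → ℤ)
    (hrow : ∀ k ≤ d + 1, ConcaveUpTo (r k) (d + 1))
    (hcol : ∀ ℓ ≤ d + 1, ConcaveUpTo (fun k => r k ℓ) (d + 1))
    (hrow_zero : ∀ k ≤ d + 1, 0 ≤ r k 0) (hcol_zero : ∀ ℓ ≤ d + 1, 0 ≤ r 0 ℓ)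
    (hdiag : r d d ≤ n * d) (hdvd : (d : ℤ) ∣ r d d) (h11 : 1 < r 1 1) (hn : n ≤ d + 1)
    (hfull : n * (d + 1) ≤ r (d + 1) (d + 1)) :
    r d d = n * d := by
  rcases d.eq_zero_or_pos with rfl | hd
  · exact hdiag.antisymm (by simpa using hrow_zero 0 (Nat.zero_le _))
  obtain ⟨m, hm⟩ := hdvd
  have hlower : n * d ≤ r d (d + 1) :=
    (hcol (d + 1) le_rfl).mul_le_apply_of_le (hcol_zero (d + 1) le_rfl) d.le_succ le_rfl d.succ_pos
      (by exact_mod_cast hfull)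
  have hupper : r d (d + 1) ≤ m * (d + 1) := by
    exact_mod_cast (hrow d d.le_succ).apply_le_mul_of_le (hrow_zero d d.le_succ) d.le_succ le_rfl hd
      (by rw [hm, mul_comm])
  by_contra hne
  have hmn : m < n := by
    refine lt_of_mul_lt_mul_right ?_ (Int.natCast_nonneg d)
    rw [mul_comm, ← hm]
    exact lt_of_le_of_ne hdiag hne
  obtain ⟨rfl, rfl⟩ :=
    eq_and_eq_add_one_of_mul_le_mul (Int.natCast_nonneg d) hmn hn (hlower.trans hupper)
  exact h11.not_ge <| apply_one_one_le_one_of_concaveUpTo hd (hrow d d.le_succ)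
    (hrow (d + 1) le_rfl) (hcol 1 (by omega)) (hrow_zero (d + 1) le_rfl) hm.le hlower hfull

/-- Let `N > n > 0` and `r : {0,…,N}² → ℤ` satisfy the boundary, monotonicity,
concavity and divisibility conditions (1)–(5). If `r(1,1) > 1` and `r(d+1,d+1) = n(d+1)`
for some `d` with `n ≤ d+1 ≤ N`, then `r(d,d) = n·d`. -/
theorem stmt14 (N n : ℕ) (hn : 0 < n) (hN : n < N)
    (r : ℕ → ℕ → ℤ)
    (hbound : ∀ k ℓ, k ≤ N → ℓ ≤ N → 0 ≤ r k ℓ ∧ r k ℓ ≤ (min k ℓ : ℤ) * n)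
    (hzero : ∀ k, k ≤ N → r k 0 = 0 ∧ r 0 k = 0)
    (h1 : ∀ k ℓ, k ≤ N → ℓ < N → r k ℓ ≤ r k (ℓ + 1))
    (h2 : ∀ k ℓ, k < N → ℓ ≤ N → r k ℓ ≤ r (k + 1) ℓ)
    (h3 : ∀ k ℓ, k ≤ N → ℓ + 1 < N → r k ℓ + r k (ℓ + 2) ≤ 2 * r k (ℓ + 1))
    (h4 : ∀ k ℓ, k + 1 < N → ℓ ≤ N → r k ℓ + r (k + 2) ℓ ≤ 2 * r (k + 1) ℓ)
    (h5 : ∀ k, k ≤ N → (k : ℤ) ∣ r k k)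
    (h11 : 1 < r 1 1)
    (d : ℕ) (hd1 : n ≤ d + 1) (hd2 : d + 1 ≤ N)
    (hfull : r (d + 1) (d + 1) = (n : ℤ) * (d + 1)) :
    r d d = (n : ℤ) * d := by
  exact stmt14_general n d r
    (fun k hk i hi => by linarith [h3 k i (hk.trans hd2) (hi.trans_le hd2)])
    (fun ℓ hℓ i hi => by linarith [h4 i ℓ (hi.trans_le hd2) (hℓ.trans hd2)])
    (fun k hk => (hzero k (hk.trans hd2)).1.ge) (fun ℓ hℓ => (hzero ℓ (hℓ.trans hd2)).2.ge)
    (by simpa [mul_comm] using (hbound d d (by omega) (by omega)).2) (h5 d (by omega)) h11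
    (by exact_mod_cast hd1) hfull.ge
end

section
/- Let N > n > 0 be integers and let r : {0, 1, …, N}² → ℤ be a function satisfying: 0 ≤ r(k,ℓ) ≤ min(k,ℓ)·n for all k, ℓ; r(k,0) = r(0,ℓ) = 0; (1) r(k,ℓ+1) ≥ r(k,ℓ) for 0 ≤ ℓ < N; (2) r(k+1,ℓ) ≥ r(k,ℓ) for 0 ≤ k < N; (3) 2·r(k,ℓ+1) ≥ r(k,ℓ) + r(k,ℓ+2) for 0 ≤ ℓ < N−1; (4) 2·r(k+1,ℓ) ≥ r(k,ℓ) + r(k+2,ℓ) for 0 ≤ k < N−1; (5) k divides r(k,k) for every k. Suppose moreover that there exists an integer d with n ≤ d + 1 ≤ N and r(d+1, d+1) = n(d+1). Then for every integer a with 1 ≤ a ≤ d + 1 one has r(d+1, a) = a·n and r(a, d+1) = a·n. -/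
/-!
Put `m = d + 1` and `c = n`. Along the line `k = m`, and likewise along `ℓ = m`, the values of `r`
form a concave sequence from `0` to `m • c`. Concavity makes the increments nonincreasing and the
first one is at most `c`, so all of them are; as `m` increments add up to `m • c`, each one
equals `c`.
-/

section

variable {α : Type*} [AddCommMonoid α] [PartialOrder α] {f : ℕ → α} {c : α} {a m : ℕ}

theorem apply_le_apply_zero_add_nsmul [IsOrderedAddMonoid α]
    (h : ∀ k < m, f (k + 1) ≤ f k + c) : f m ≤ f 0 + m • c :=
  (add_left_mono (a := c)).seq_le_seq (y := fun k ↦ f 0 + k • c) m (by simp)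
    h fun k _ ↦ by rw [succ_nsmul, add_assoc]

/-- Discrete concavity of a sequence on `{0, …, m}`, the property that conditions (3) and (4) give
for the rows and columns of `r`. The second-difference inequality is arranged so that no subtraction
occurs and `α` need not be a group. -/
def IsConcaveUpTo (f : ℕ → α) (m : ℕ) : Prop :=
  ∀ k, k + 2 ≤ m → f k + f (k + 2) ≤ 2 • f (k + 1)

namespace IsConcaveUpTo

variable [IsOrderedCancelAddMonoid α]

theorem apply_succ_le_apply_add (hf : IsConcaveUpTo f m) (h₁ : f 1 ≤ f 0 + c) :
    ∀ k < m, f (k + 1) ≤ f k + c := by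
  intro k hk
  induction k with
  | zero => exact h₁
  | succ k ih =>
    refine le_of_add_le_add_left (a := f k) ?_
    calc f k + f (k + 2) ≤ f (k + 1) + f (k + 1) := (hf k hk).trans_eq (two_nsmul _)
      _ ≤ (f k + c) + f (k + 1) := by gcongr; exact ih (by lia)
      _ = f k + (f (k + 1) + c) := by rw [add_assoc, add_comm c]

theorem eq_apply_zero_add_nsmul (hf : IsConcaveUpTo f m) (h₁ : f 1 ≤ f 0 + c)
    (hm : f m = f 0 + m • c) (ha : a ≤ m) : f a = f 0 + a • c := by
  have increment_le := hf.apply_succ_le_apply_add h₁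
  refine le_antisymm
    (apply_le_apply_zero_add_nsmul fun k hk ↦ increment_le k (hk.trans_le ha)) ?_
  obtain ⟨p, rfl⟩ := Nat.exists_eq_add_of_le ha
  have tail_le : f (a + p) ≤ f a + p • c :=
    apply_le_apply_zero_add_nsmul (f := fun k ↦ f (a + k)) fun k hk ↦
      increment_le (a + k) (by lia)
  refine le_of_add_le_add_right (a := p • c) ?_
  rwa [add_assoc, ← add_nsmul, ← hm]

end IsConcaveUpTo

theorem stmt15_general [IsOrderedCancelAddMonoid α] {r : ℕ → ℕ → α}
    (hrow : IsConcaveUpTo (fun ℓ ↦ r m ℓ) m) (hcol : IsConcaveUpTo (fun k ↦ r k m) m)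
    (hrow₀ : r m 0 = 0) (hcol₀ : r 0 m = 0) (hrow₁ : r m 1 ≤ c) (hcol₁ : r 1 m ≤ c)
    (hfull : r m m = m • c) (ha : a ≤ m) : r m a = a • c ∧ r a m = a • c := by
  constructor
  · simpa [hrow₀] using hrow.eq_apply_zero_add_nsmul (c := c) (by simpa [hrow₀])
      (by simpa [hrow₀]) ha
  · simpa [hcol₀] using hcol.eq_apply_zero_add_nsmul (c := c) (by simpa [hcol₀])
      (by simpa [hcol₀]) ha

end

/-- Let `N > n > 0` and `r : {0,…,N}² → ℤ` satisfy the boundary, monotonicity,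
concavity and divisibility conditions (1)–(5). If `r(d+1,d+1) = n(d+1)`
for some `d` with `n ≤ d+1 ≤ N`, then `r(d+1,a) = a·n = r(a,d+1)` for all `1 ≤ a ≤ d+1`. -/
theorem stmt15 (N n : ℕ) (hn : 0 < n) (hN : n < N)
    (r : ℕ → ℕ → ℤ)
    (hbound : ∀ k ℓ, k ≤ N → ℓ ≤ N → 0 ≤ r k ℓ ∧ r k ℓ ≤ (min k ℓ : ℤ) * n)
    (hzero : ∀ k, k ≤ N → r k 0 = 0 ∧ r 0 k = 0)
    (h1 : ∀ k ℓ, k ≤ N → ℓ < N → r k ℓ ≤ r k (ℓ + 1))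
    (h2 : ∀ k ℓ, k < N → ℓ ≤ N → r k ℓ ≤ r (k + 1) ℓ)
    (h3 : ∀ k ℓ, k ≤ N → ℓ + 1 < N → r k ℓ + r k (ℓ + 2) ≤ 2 * r k (ℓ + 1))
    (h4 : ∀ k ℓ, k + 1 < N → ℓ ≤ N → r k ℓ + r (k + 2) ℓ ≤ 2 * r (k + 1) ℓ)
    (h5 : ∀ k, k ≤ N → (k : ℤ) ∣ r k k)
    (d : ℕ) (hd1 : n ≤ d + 1) (hd2 : d + 1 ≤ N)
    (hfull : r (d + 1) (d + 1) = (n : ℤ) * (d + 1)) :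
    ∀ a : ℕ, 1 ≤ a → a ≤ d + 1 →
      r (d + 1) a = (a : ℤ) * n ∧ r a (d + 1) = (a : ℤ) * n := by
  have hrow₁ : r (d + 1) 1 ≤ n := by simpa using (hbound (d + 1) 1 hd2 (by lia)).2
  have hcol₁ : r 1 (d + 1) ≤ n := by simpa using (hbound 1 (d + 1) (by lia) hd2).2
  intro a _ ha
  simpa using stmt15_general (fun ℓ hℓ ↦ by simpa using h3 (d + 1) ℓ hd2 (by lia))
    (fun k hk ↦ by simpa using h4 k (d + 1) (by lia) hd2)
    (hzero _ hd2).1 (hzero _ hd2).2 hrow₁ hcol₁ (by simpa [mul_comm] using hfull) ha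
end

section
/- Let N > n > 0 be integers and let r : {0, 1, …, N}² → ℤ be a function satisfying: 0 ≤ r(k,ℓ) ≤ min(k,ℓ)·n for all k, ℓ; r(k,0) = r(0,ℓ) = 0; (1) r(k,ℓ+1) ≥ r(k,ℓ) for 0 ≤ ℓ < N; (2) r(k+1,ℓ) ≥ r(k,ℓ) for 0 ≤ k < N; (3) 2·r(k,ℓ+1) ≥ r(k,ℓ) + r(k,ℓ+2) for 0 ≤ ℓ < N−1; (4) 2·r(k+1,ℓ) ≥ r(k,ℓ) + r(k+2,ℓ) for 0 ≤ k < N−1; (5) k divides r(k,k) for every k. Suppose moreover that r(1,1) > 1 and that there exists an integer d with n ≤ d + 1 ≤ N and r(d+1, d+1) = n(d+1). Then r(1, d) = n. -/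
/-!
Column `d + 1` of `r` is concave, starts at `0` and climbs to `n (d + 1)` in `d + 1` steps, so its
first step is at least `n`; hence `r 1 (d + 1) = n`. Row `1` is concave as well: were its step from
`d` to `d + 1` positive, by integrality all of its steps up to there would be at least `1`, and then
`n = r 1 (d + 1) ≥ r 1 1 + d > d + 1 ≥ n`.
-/

open Finset fwdDiff

section DiscreteConcavity

variable {α : Type*} [AddCommGroup α] [PartialOrder α] [IsOrderedAddMonoid α] {f : ℕ → α} {m : ℕ}

lemma antitoneOn_fwdDiff_of_add_le_two_nsmul
    (hf : ∀ k, k + 1 < m → f k + f (k + 2) ≤ 2 • f (k + 1)) :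
    AntitoneOn (Δ_[1] f) (Set.Iio m) := by
  refine antitoneOn_of_add_one_le Set.ordConnected_Iio fun k _ _ hk ↦ ?_
  have hadd : f (k + 2) + f k ≤ f (k + 1) + f (k + 1) := by
    simpa only [add_comm, two_nsmul] using hf k hk
  exact sub_le_sub_iff.mpr hadd

lemma sub_le_nsmul_fwdDiff_zero_of_antitoneOn (hf : AntitoneOn (Δ_[1] f) (Set.Iio m)) :
    f m - f 0 ≤ m • Δ_[1] f 0 := by
  have hstep : ∀ k ∈ range m, Δ_[1] f k ≤ Δ_[1] f 0 := fun k hk ↦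
    have hkm := mem_range.mp hk
    hf (Nat.zero_lt_of_lt hkm) hkm k.zero_le
  calc f m - f 0 = ∑ k ∈ range m, Δ_[1] f k := (sum_range_sub f m).symm
    _ ≤ #(range m) • Δ_[1] f 0 := sum_le_card_nsmul _ _ _ hstep
    _ = m • Δ_[1] f 0 := by rw [card_range]

lemma nsmul_fwdDiff_le_sub_of_antitoneOn (hf : AntitoneOn (Δ_[1] f) (Set.Iio (m + 1))) :
    m • Δ_[1] f m ≤ f (m + 1) - f 1 := by
  have hstep : ∀ k ∈ range m, Δ_[1] f m ≤ Δ_[1] f (k + 1) := fun k hk ↦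
    have hkm := Nat.succ_le_of_lt (mem_range.mp hk)
    hf (Nat.lt_succ_of_le hkm) m.lt_succ_self hkm
  calc m • Δ_[1] f m = #(range m) • Δ_[1] f m := by rw [card_range]
    _ ≤ ∑ k ∈ range m, Δ_[1] f (k + 1) := card_nsmul_le_sum _ _ _ hstep
    _ = f (m + 1) - f 1 := sum_range_sub (fun k ↦ f (k + 1)) m

end DiscreteConcavity

lemma le_of_antitoneOn_fwdDiff_of_lt_add {f : ℕ → ℤ} {m : ℕ}
    (hf : AntitoneOn (Δ_[1] f) (Set.Iio (m + 1))) (hlt : f (m + 1) < f 1 + m) :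
    f (m + 1) ≤ f m := by
  by_contra! hstep
  have hgrowth : (m : ℤ) ≤ f (m + 1) - f 1 :=
    calc (m : ℤ) = m • (1 : ℤ) := by simp
      _ ≤ m • Δ_[1] f m := nsmul_le_nsmul_right (Int.le_sub_left_of_add_le hstep) m
      _ ≤ f (m + 1) - f 1 := nsmul_fwdDiff_le_sub_of_antitoneOn hf
  linarith

theorem stmt16_general {n : ℤ} {r : ℕ → ℕ → ℤ} {d : ℕ}
    (hbound : r 1 (d + 1) ≤ n) (hzero : r 0 (d + 1) = 0) (hmono : r 1 d ≤ r 1 (d + 1))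
    (hrow : ∀ ℓ < d, r 1 ℓ + r 1 (ℓ + 2) ≤ 2 * r 1 (ℓ + 1))
    (hcol : ∀ k < d, r k (d + 1) + r (k + 2) (d + 1) ≤ 2 * r (k + 1) (d + 1))
    (h11 : 1 < r 1 1) (hd : n ≤ d + 1) (hfull : r (d + 1) (d + 1) = n * (d + 1)) :
    r 1 d = n := by
  have hrow_anti : AntitoneOn (Δ_[1] (r 1)) (Set.Iio (d + 1)) :=
    antitoneOn_fwdDiff_of_add_le_two_nsmul fun ℓ hℓ ↦ by simpa using hrow ℓ (by lia)
  have hcol_anti : AntitoneOn (Δ_[1] (r · (d + 1))) (Set.Iio (d + 1)) :=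
    antitoneOn_fwdDiff_of_add_le_two_nsmul fun k hk ↦ by simpa using hcol k (by lia)
  have hclimb : (d + 1) • n ≤ (d + 1) • Δ_[1] (r · (d + 1)) 0 :=
    calc (d + 1) • n = r (d + 1) (d + 1) - r 0 (d + 1) := by simp [hfull, hzero, mul_comm]
      _ ≤ (d + 1) • Δ_[1] (r · (d + 1)) 0 := sub_le_nsmul_fwdDiff_zero_of_antitoneOn hcol_anti
  have hfirst : n ≤ r 1 (d + 1) := by
    simpa [fwdDiff, hzero] using le_of_nsmul_le_nsmul_right d.succ_ne_zero hclimb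
  have hlast : r 1 (d + 1) = n := hbound.antisymm hfirst
  have hstationary : r 1 (d + 1) ≤ r 1 d :=
    le_of_antitoneOn_fwdDiff_of_lt_add hrow_anti (by linarith)
  exact (hmono.antisymm hstationary).trans hlast

/-- Let `N > n > 0` and `r : {0,…,N}² → ℤ` satisfy the boundary, monotonicity,
concavity and divisibility conditions (1)–(5). If `r(1,1) > 1` and `r(d+1,d+1) = n(d+1)`
for some `d` with `n ≤ d+1 ≤ N`, then `r(1,d) = n`. -/
theorem stmt16 (N n : ℕ) (hn : 0 < n) (hN : n < N)
    (r : ℕ → ℕ → ℤ)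
    (hbound : ∀ k ℓ, k ≤ N → ℓ ≤ N → 0 ≤ r k ℓ ∧ r k ℓ ≤ (min k ℓ : ℤ) * n)
    (hzero : ∀ k, k ≤ N → r k 0 = 0 ∧ r 0 k = 0)
    (h1 : ∀ k ℓ, k ≤ N → ℓ < N → r k ℓ ≤ r k (ℓ + 1))
    (h2 : ∀ k ℓ, k < N → ℓ ≤ N → r k ℓ ≤ r (k + 1) ℓ)
    (h3 : ∀ k ℓ, k ≤ N → ℓ + 1 < N → r k ℓ + r k (ℓ + 2) ≤ 2 * r k (ℓ + 1))
    (h4 : ∀ k ℓ, k + 1 < N → ℓ ≤ N → r k ℓ + r (k + 2) ℓ ≤ 2 * r (k + 1) ℓ)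
    (h5 : ∀ k, k ≤ N → (k : ℤ) ∣ r k k)
    (h11 : 1 < r 1 1)
    (d : ℕ) (hd1 : n ≤ d + 1) (hd2 : d + 1 ≤ N)
    (hfull : r (d + 1) (d + 1) = (n : ℤ) * (d + 1)) :
    r 1 d = (n : ℤ) :=
  stmt16_general (by simpa using (hbound 1 (d + 1) (by lia) hd2).2) (hzero _ hd2).2
    (h1 1 d (by lia) hd2) (fun ℓ _ ↦ h3 1 ℓ (by lia) (by lia))
    (fun k _ ↦ h4 k (d + 1) (by lia) hd2) h11 (by lia) hfull
end

section
/- (Concavity of maximal blow-up ranks.) Let F be a field, B ≤ M(n,F) a matrix space, and k, ℓ positive integers. For positive integers a, b let ρ(a,b) denote the maximal rank of a matrix in the (a,b)-blow-up B^{(a,b)}. If |F| > 2n(k+2), then 2·ρ(k+1, ℓ) ≥ ρ(k, ℓ) + ρ(k+2, ℓ). -/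
open Matrix Kronecker

/-!
A matrix of the `(k, ℓ)`-blow-up is a stack of `k` arbitrary elements of the `(1, ℓ)`-blow-up, so
the theorem is about stacks of matrices from any matrix space `W`. Let `M` be a stack of `k + 2`
blocks and `N` one of `k` blocks, both of maximal rank, and pad `N` with a zero block at both ends.
For all but at most `2 rank N` scalars `t`, the stack `M + t N` has rank at least `rank M`, and its
`k` middle blocks have rank at least `rank N`. Deleting the last or the first block of `M + t N`
leaves `k + 1` blocks, and the rank of a set of rows is submodular.
-/

section Submodularity

theorem finrank_union_add_finrank_inter_le {K V : Type*} [DivisionRing K] [AddCommGroup V]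
    [Module K V] [FiniteDimensional K V] (s t : Set V) :
    Set.finrank K (s ∪ t) + Set.finrank K (s ∩ t) ≤ Set.finrank K s + Set.finrank K t := by
  unfold Set.finrank
  rw [Submodule.span_union,
    ← Submodule.finrank_sup_add_finrank_inf_eq (Submodule.span K s) (Submodule.span K t)]
  gcongr
  exact Submodule.finrank_mono <|
    le_inf (Submodule.span_mono Set.inter_subset_left) (Submodule.span_mono Set.inter_subset_right)

variable {F m m₀ m₁ m₂ p : Type*} [Field F] [Fintype p]

theorem rank_submatrix_eq_finrank_image_row [Finite m₀] (M : Matrix m p F) (f : m₀ → m) :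
    (M.submatrix f id).rank = Set.finrank F (M.row '' Set.range f) := by
  rw [rank_eq_finrank_span_row, ← Set.range_comp]
  rfl

theorem rank_add_rank_submatrix_le [Finite m] [Finite m₀] [Finite m₁] [Finite m₂]
    (M : Matrix m p F) {f : m₁ → m} {g : m₂ → m} {h : m₀ → m}
    (hfg : Set.range f ∪ Set.range g = Set.univ)
    (hh : Set.range h ⊆ Set.range f ∩ Set.range g) :
    M.rank + (M.submatrix h id).rank ≤ (M.submatrix f id).rank + (M.submatrix g id).rank := by
  have hM : M.rank = Set.finrank F (M.row '' Set.range f ∪ M.row '' Set.range g) := by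
    rw [rank_eq_finrank_span_row, ← Set.image_union, hfg, Set.image_univ, Set.finrank]
  simp only [hM, rank_submatrix_eq_finrank_image_row]
  refine le_trans ?_ (finrank_union_add_finrank_inter_le _ _)
  gcongr
  exact Set.finrank_mono ((Set.image_mono hh).trans (Set.image_inter_subset _ _ _))

theorem rank_add_rank_submatrix_middle_le {k : ℕ} [Finite m]
    (R : Matrix (m × Fin (k + 2)) p F) :
    R.rank + (R.submatrix (Prod.map id fun i : Fin k => i.succ.castSucc) id).rank ≤
      (R.submatrix (Prod.map id Fin.castSucc) id).rank +
        (R.submatrix (Prod.map id Fin.succ) id).rank := by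
  refine rank_add_rank_submatrix_le R (Set.eq_univ_of_forall ?_) ?_
  · rintro ⟨a, i⟩
    cases i using Fin.cases with
    | zero => exact .inl ⟨(a, 0), rfl⟩
    | succ i => exact .inr ⟨(a, i), rfl⟩
  · rintro _ ⟨⟨a, i⟩, rfl⟩
    exact ⟨⟨(a, i.succ), rfl⟩, ⟨(a, i.castSucc), rfl⟩⟩

theorem rank_extend_zero_le [Finite m] [Finite m₀] (f : m → m₀) (M : Matrix m p F) :
    (of (Function.extend f M 0)).rank ≤ M.rank := by
  classical
  rw [rank_eq_finrank_span_row, rank_eq_finrank_span_row]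
  refine Submodule.finrank_mono (Submodule.span_le.2 ?_)
  rintro _ ⟨i, rfl⟩
  by_cases hi : ∃ a, f a = i
  · have hrow : (of (Function.extend f M 0)).row i = M.row hi.choose :=
      (Function.extend_def f M 0 i).trans (dif_pos hi)
    exact hrow ▸ Submodule.subset_span ⟨_, rfl⟩
  · have hrow : (of (Function.extend f M 0)).row i = 0 := Function.extend_apply' _ _ i hi
    exact hrow ▸ Submodule.zero_mem _

end Submodularity

section Pencils

variable {F ι m p : Type*} [Field F]

theorem encard_setOf_det_add_smul_eq_zero_le [Fintype ι] [DecidableEq ι] {A B : Matrix ι ι F}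
    (h : A.det ≠ 0 ∨ B.det ≠ 0) :
    {t : F | (A + t • B).det = 0}.encard ≤ Fintype.card ι := by
  classical
  let f : Polynomial F := det ((Polynomial.X : Polynomial F) • B.map Polynomial.C +
    A.map Polynomial.C)
  have hcoeff_zero : f.coeff 0 = A.det := Polynomial.coeff_det_X_add_C_zero B A
  have hcoeff_card : f.coeff (Fintype.card ι) = B.det := Polynomial.coeff_det_X_add_C_card B A
  have hf : f ≠ 0 := fun hf => by
    rcases h with h | h
    · exact h (by rw [← hcoeff_zero, hf, Polynomial.coeff_zero])
    · exact h (by rw [← hcoeff_card, hf, Polynomial.coeff_zero])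
  have heval (t : F) : f.eval t = (A + t • B).det := by
    rw [← Polynomial.coe_evalRingHom, RingHom.map_det]
    congr 1
    ext i j
    simp [add_comm, mul_comm t]
  have hroots : {t : F | (A + t • B).det = 0} ⊆ f.roots.toFinset := fun t ht => by
    simpa [hf, heval] using ht
  calc {t : F | (A + t • B).det = 0}.encard ≤ f.roots.toFinset.card := by
        simpa using Set.encard_le_encard hroots
    _ ≤ Fintype.card ι := by
      exact_mod_cast (Multiset.toFinset_card_le _).trans
        (f.card_roots'.trans (Polynomial.natDegree_det_X_add_C_le B A))

variable [Fintype p]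

theorem det_mul_mul_eq_zero_of_rank_lt [Fintype m] [Fintype ι] [DecidableEq ι] {M : Matrix m p F}
    (h : M.rank < Fintype.card ι) (P : Matrix ι m F) (Q : Matrix p ι F) :
    (P * M * Q).det = 0 := by
  contrapose! h
  calc Fintype.card ι = (P * M * Q).rank := (rank_of_det_ne_zero h).symm
    _ ≤ (P * M).rank := rank_mul_le_left _ _
    _ ≤ M.rank := rank_mul_le_right _ _

theorem exists_rank_factorization_s17 [Fintype m] (M : Matrix m p F) :
    ∃ (U : Matrix m (Fin M.rank) F) (V : Matrix (Fin M.rank) p F)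
      (P : Matrix (Fin M.rank) m F) (Q : Matrix p (Fin M.rank) F),
      M = U * V ∧ P * U = 1 ∧ V * Q = 1 := by
  classical
  let e : (Fin M.rank → F) ≃ₗ[F] M.mulVecLin.range :=
    LinearEquiv.ofFinrankEq _ _ (Module.finrank_fin_fun F)
  let u : (Fin M.rank → F) →ₗ[F] m → F := M.mulVecLin.range.subtype ∘ₗ e
  let v : (p → F) →ₗ[F] Fin M.rank → F := e.symm ∘ₗ M.mulVecLin.rangeRestrict
  have huv : u ∘ₗ v = toLin' M := by
    refine LinearMap.ext fun x => ?_
    simp [u, v]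
  obtain ⟨l, hl⟩ := u.exists_leftInverse_of_injective
    (LinearMap.ker_eq_bot.2 (Subtype.val_injective.comp e.injective))
  obtain ⟨r, hr⟩ := v.exists_rightInverse_of_surjective
    (LinearMap.range_eq_top.2 (e.symm.surjective.comp M.mulVecLin.surjective_rangeRestrict))
  refine ⟨u.toMatrix', v.toMatrix', l.toMatrix', r.toMatrix', ?_, ?_, ?_⟩
  · rw [← LinearMap.toMatrix'_comp, huv, LinearMap.toMatrix'_toLin']
  · rw [← LinearMap.toMatrix'_comp, hl, LinearMap.toMatrix'_id]
  · rw [← LinearMap.toMatrix'_comp, hr, LinearMap.toMatrix'_id]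

theorem exists_mul_mul_eq_one [Fintype m] (M : Matrix m p F) :
    ∃ (P : Matrix (Fin M.rank) m F) (Q : Matrix p (Fin M.rank) F), P * M * Q = 1 := by
  obtain ⟨U, V, P, Q, hUV, hPU, hVQ⟩ := exists_rank_factorization_s17 M
  refine ⟨P, Q, ?_⟩
  calc P * M * Q = P * U * (V * Q) := by simp only [hUV, Matrix.mul_assoc]
    _ = 1 := by rw [hPU, hVQ, Matrix.one_mul]

theorem encard_setOf_rank_add_smul_lt_rank_left_le [Finite m] (M N : Matrix m p F) :
    {t : F | (M + t • N).rank < M.rank}.encard ≤ N.rank := by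
  cases nonempty_fintype m
  obtain ⟨P, Q, hPQ⟩ := exists_mul_mul_eq_one M
  obtain ⟨U, V, -, -, hUV, -⟩ := exists_rank_factorization_s17 N
  have hdet (t : F) : (P * (M + t • N) * Q).det = (1 + t • (V * Q * (P * U))).det := by
    have hmul : P * (M + t • N) * Q = 1 + P * U * (t • (V * Q)) := by
      calc P * (M + t • N) * Q = P * M * Q + P * (t • N) * Q := by
            rw [Matrix.mul_add, Matrix.add_mul]
        _ = 1 + P * (t • (U * V)) * Q := by rw [hPQ, ← hUV]
        _ = 1 + P * U * (t • (V * Q)) := by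
            simp only [Matrix.mul_smul, Matrix.smul_mul, Matrix.mul_assoc]
    -- Sylvester's identity trades a determinant of size `rank M` for one of size `rank N`.
    rw [hmul, det_one_add_mul_comm, Matrix.smul_mul]
  have hsub : {t : F | (M + t • N).rank < M.rank} ⊆
      {t | (1 + t • (V * Q * (P * U))).det = 0} := fun t ht =>
    (hdet t).symm.trans (det_mul_mul_eq_zero_of_rank_lt (by simpa using ht) P Q)
  simpa using (Set.encard_le_encard hsub).trans
    (encard_setOf_det_add_smul_eq_zero_le (.inl (by simp)))

theorem encard_setOf_rank_add_smul_lt_rank_right_le [Finite m] (M N : Matrix m p F) :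
    {t : F | (M + t • N).rank < N.rank}.encard ≤ N.rank := by
  cases nonempty_fintype m
  obtain ⟨P, Q, hPQ⟩ := exists_mul_mul_eq_one N
  have hmul (t : F) : P * (M + t • N) * Q = P * M * Q + t • 1 := by
    rw [← hPQ, Matrix.mul_add, Matrix.add_mul, Matrix.mul_smul, Matrix.smul_mul]
  have hsub : {t : F | (M + t • N).rank < N.rank} ⊆ {t | (P * M * Q + t • 1).det = 0} :=
    fun t ht => (congrArg det (hmul t)).symm.trans
      (det_mul_mul_eq_zero_of_rank_lt (by simpa using ht) P Q)
  simpa using (Set.encard_le_encard hsub).trans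
    (encard_setOf_det_add_smul_eq_zero_le (.inr (by simp)))

end Pencils

section RowBlowUp

variable {F m p ι ι' : Type*} [Field F]

/-- The matrices obtained by stacking a family of elements of the matrix space `W`, one for each
`i : ι`; this is the `(#ι, 1)`-blow-up of `W`. The index `i` comes second in the row index `(a, i)`,
as in `A ⊗ₖ T`. -/
def rowBlowUp (W : Submodule F (Matrix m p F)) (ι : Type*) :
    Submodule F (Matrix (m × ι) p F) where
  carrier := {M | ∀ i, M.submatrix (·, i) id ∈ W}
  add_mem' hM hN i := W.add_mem (hM i) (hN i)
  zero_mem' _ := W.zero_mem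
  smul_mem' c _ hM i := W.smul_mem c (hM i)

namespace rowBlowUp

variable {W : Submodule F (Matrix m p F)}

theorem submatrix_mem {M : Matrix (m × ι) p F} (hM : M ∈ rowBlowUp W ι) (f : ι' → ι) :
    M.submatrix (Prod.map id f) id ∈ rowBlowUp W ι' :=
  fun i => hM (f i)

theorem exists_submatrix_eq [Finite m] [Finite ι] [Finite ι'] [Fintype p]
    {N : Matrix (m × ι) p F} (hN : N ∈ rowBlowUp W ι) {f : ι → ι'} (hf : f.Injective) :
    ∃ N' ∈ rowBlowUp W ι', N'.submatrix (Prod.map id f) id = N ∧ N'.rank ≤ N.rank := by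
  have hinj : (Prod.map id f : m × ι → m × ι').Injective := Function.injective_id.prodMap hf
  refine ⟨of (Function.extend (Prod.map id f) N 0), fun j => ?_, ?_, rank_extend_zero_le _ N⟩
  · by_cases hj : ∃ i, f i = j
    · obtain ⟨i, rfl⟩ := hj
      convert hN i using 1
      exact funext fun a => hinj.extend_apply N 0 (a, i)
    · convert W.zero_mem using 1
      exact funext fun a => Function.extend_apply' _ _ (a, j)
        fun ⟨b, hb⟩ => hj ⟨b.2, congrArg Prod.snd hb⟩
  · exact funext fun b => hinj.extend_apply N 0 b

theorem exists_rank_le_and_rank_le_submatrix [Finite m] [Finite ι] [Finite ι'] [Fintype p]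
    {M : Matrix (m × ι') p F} {N : Matrix (m × ι) p F} (hM : M ∈ rowBlowUp W ι')
    (hN : N ∈ rowBlowUp W ι) {f : ι → ι'} (hf : f.Injective)
    (hF : (2 * N.rank : Cardinal) < Cardinal.mk F) :
    ∃ R ∈ rowBlowUp W ι', M.rank ≤ R.rank ∧ N.rank ≤ (R.submatrix (Prod.map id f) id).rank := by
  obtain ⟨N', hN', hsub, hrank⟩ := exists_submatrix_eq hN hf
  let M₀ := M.submatrix (Prod.map id f) id
  let bad := {t : F | (M + t • N').rank < M.rank} ∪ {t : F | (M₀ + t • N).rank < N.rank}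
  have hbad : bad.encard < ENat.card F :=
    calc bad.encard ≤ N'.rank + N.rank :=
          (Set.encard_union_le _ _).trans (add_le_add
            (encard_setOf_rank_add_smul_lt_rank_left_le M N')
            (encard_setOf_rank_add_smul_lt_rank_right_le M₀ N))
      _ ≤ (2 * N.rank : ℕ) := by norm_cast; omega
      _ < ENat.card F := Cardinal.natCast_lt_toENat.2 (by exact_mod_cast hF)
  obtain ⟨t, ht⟩ : ∃ t, t ∉ bad := by
    by_contra! hall
    exact hbad.ne (by rw [Set.eq_univ_of_forall hall, Set.encard_univ])
  simp only [bad, Set.mem_union, Set.mem_ofPred_eq, not_or, not_lt] at ht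
  refine ⟨M + t • N', add_mem hM (Submodule.smul_mem _ t hN'), ht.1, ?_⟩
  have hsubR : (M + t • N').submatrix (Prod.map id f) id = M₀ + t • N := hsub ▸ rfl
  exact hsubR ▸ ht.2

end rowBlowUp

end RowBlowUp

section BlowUp

variable {F : Type} [Field F] {n : ℕ}

/-- The `(1, ℓ)`-blow-up of the matrix space `B`, with the one-element factor of the row index
dropped. Its elements are the block rows of the `(k, ℓ)`-blow-ups. -/
def blockRowSpace (B : Submodule F (Matrix (Fin n) (Fin n) F)) (ℓ : ℕ) :
    Submodule F (Matrix (Fin n) (Fin n × Fin ℓ) F) :=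
  Submodule.span F {X | ∃ A ∈ B, ∃ v : Fin ℓ → F, X = of fun a b => A a b.1 * v b.2}

theorem of_ite_eq_mem_blowUp {B : Submodule F (Matrix (Fin n) (Fin n) F)} {k ℓ : ℕ}
    (i : Fin k) {X : Matrix (Fin n) (Fin n × Fin ℓ) F} (hX : X ∈ blockRowSpace B ℓ) :
    (of fun a b => if a.2 = i then X a.1 b else 0) ∈ blowUp B k ℓ := by
  induction hX using Submodule.span_induction with
  | mem X h =>
    obtain ⟨A, hA, v, rfl⟩ := h
    refine Submodule.subset_span ⟨A, hA, of fun j c => if j = i then v c else 0, ?_⟩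
    ext a b
    simp
  | zero =>
    convert Submodule.zero_mem (blowUp B k ℓ) using 1
    ext a b
    simp
  | add X Y _ _ hX hY =>
    convert add_mem hX hY using 1
    ext a b
    simp only [Matrix.add_apply, of_apply, ite_add_ite, add_zero]
  | smul c X _ hX =>
    convert Submodule.smul_mem _ c hX using 1
    ext a b
    simp

theorem blowUp_eq_rowBlowUp (B : Submodule F (Matrix (Fin n) (Fin n) F)) (k ℓ : ℕ) :
    blowUp B k ℓ = rowBlowUp (blockRowSpace B ℓ) (Fin k) := by
  apply le_antisymm
  · refine Submodule.span_le.2 ?_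
    rintro _ ⟨A, hA, T, rfl⟩ i
    exact Submodule.subset_span ⟨A, hA, T i, rfl⟩
  · intro M hM
    have hsum : M = ∑ i, of fun a b => if a.2 = i then M.submatrix (·, i) id a.1 b else 0 := by
      ext a b
      simp [Matrix.sum_apply]
    rw [hsum]
    exact Submodule.sum_mem _ fun i _ => of_ite_eq_mem_blowUp i (hM i)

end BlowUp

theorem stmt17_general {F m p : Type*} [Field F] [Finite m] [Fintype p]
    (W : Submodule F (Matrix m p F)) (k : ℕ) {ρk ρk1 ρk2 : ℕ}
    (hF : (2 * ρk : Cardinal) < Cardinal.mk F)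
    (hρk : IsGreatest {t : ℕ | ∃ A ∈ rowBlowUp W (Fin k), t = A.rank} ρk)
    (hρk1 : IsGreatest {t : ℕ | ∃ A ∈ rowBlowUp W (Fin (k + 1)), t = A.rank} ρk1)
    (hρk2 : IsGreatest {t : ℕ | ∃ A ∈ rowBlowUp W (Fin (k + 2)), t = A.rank} ρk2) :
    ρk + ρk2 ≤ 2 * ρk1 := by
  obtain ⟨N, hN, rfl⟩ := hρk.1
  obtain ⟨M, hM, rfl⟩ := hρk2.1
  obtain ⟨R, hR, hMR, hNR⟩ := rowBlowUp.exists_rank_le_and_rank_le_submatrix hM hN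
    (f := fun i => i.succ.castSucc) ((Fin.castSucc_injective _).comp (Fin.succ_injective _)) hF
  have hle (f : Fin (k + 1) → Fin (k + 2)) : (R.submatrix (Prod.map id f) id).rank ≤ ρk1 :=
    hρk1.2 ⟨_, rowBlowUp.submatrix_mem hR f, rfl⟩
  have := rank_add_rank_submatrix_middle_le R
  linarith [hle Fin.castSucc, hle Fin.succ]

/-- Concavity of maximal blow-up ranks: if `ρ(a,b)` denotes the maximal rank of a matrix
in the `(a,b)`-blow-up of `B ≤ M(n,F)` and `|F| > 2n(k+2)`, then
`2·ρ(k+1,ℓ) ≥ ρ(k,ℓ) + ρ(k+2,ℓ)`. -/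
theorem stmt17 {F : Type} [Field F] {n : ℕ}
    (B : Submodule F (Matrix (Fin n) (Fin n) F))
    (k ℓ : ℕ) (hk : 0 < k) (hℓ : 0 < ℓ)
    (hF : (2 * n * (k + 2) : Cardinal) < Cardinal.mk F)
    (ρk ρk1 ρk2 : ℕ)
    (hρk : IsGreatest {t : ℕ | ∃ A ∈ blowUp B k ℓ, t = A.rank} ρk)
    (hρk1 : IsGreatest {t : ℕ | ∃ A ∈ blowUp B (k + 1) ℓ, t = A.rank} ρk1)
    (hρk2 : IsGreatest {t : ℕ | ∃ A ∈ blowUp B (k + 2) ℓ, t = A.rank} ρk2) :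
    ρk + ρk2 ≤ 2 * ρk1 := by
  simp only [blowUp_eq_rowBlowUp] at hρk hρk1 hρk2
  refine stmt17_general (blockRowSpace B ℓ) k (lt_of_le_of_lt ?_ hF) hρk hρk1 hρk2
  obtain ⟨N, -, rfl⟩ := hρk.1
  have hN : N.rank ≤ n * k := by simpa using N.rank_le_card_height
  exact_mod_cast (by nlinarith : 2 * N.rank ≤ 2 * n * (k + 2))
end

section
/- Let F be a field and E a finite extension field of F of degree e. Let B₁, …, B_m ∈ M(n, F) and let d be a positive integer. If there exist matrices T₁, …, T_m ∈ M(d, E) such that the matrix Σᵢ Bᵢ ⊗ Tᵢ ∈ M(nd, E) has rank t over E, then there exist matrices T′₁, …, T′_m ∈ M(de, F) such that the matrix Σᵢ Bᵢ ⊗ T′ᵢ ∈ M(nde, F) has rank t·e over F. (The matrices T′ᵢ may be obtained from the Tᵢ by replacing each entry with its e×e matrix under the left regular representation of E over F.) -/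
open Matrix Kronecker

/-!
Fix a basis `b` of `E` over `F`. Replacing every entry `γ` of a matrix `A` over `E` by the matrix
of `x ↦ γ * x` in the basis `b` yields a matrix of the *same* linear map, now regarded as
`F`-linear. Its range is unchanged as a set, so the tower law multiplies the rank by the degree of
the extension. Entries coming from `F` act as scalars under this replacement, hence it carries
`Σᵢ Bᵢ ⊗ Tᵢ` to `Σᵢ Bᵢ ⊗ Tᵢ'` up to a reassociation of the indices.
-/

section BlockLeftMulMatrix

variable {F E κ l m n p : Type*} [Fintype κ] [DecidableEq κ]

section Semiring

variable [CommSemiring F] [Semiring E] [Algebra F E] (b : Module.Basis κ F E)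

/-- The matrix over `F` obtained from a matrix over `E` by replacing each entry with its matrix
under the left regular representation of `E` with respect to `b`. It is the entrywise counterpart
of restriction of scalars. In an index `(i, k)`, the position `i` is that of the original entry and
`k` is the position inside the block. -/
noncomputable def blockLeftMulMatrix : Matrix m n E →ₗ[F] Matrix (m × κ) (n × κ) F :=
  (compLinearEquiv m n κ κ F F).toLinearMap ∘ₗ (Algebra.leftMulMatrix b).toLinearMap.mapMatrix

@[simp]
theorem blockLeftMulMatrix_apply (A : Matrix m n E) (i : m × κ) (j : n × κ) :
    blockLeftMulMatrix b A i j = Algebra.leftMulMatrix b (A i.1 j.1) i.2 j.2 :=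
  rfl

theorem kronecker_reindex_blockLeftMulMatrix {n' p' : Type*} (en : n × κ ≃ n') (ep : p × κ ≃ p')
    (B : Matrix l m F) (A : Matrix n p E) :
    B ⊗ₖ reindex en ep (blockLeftMulMatrix b A) =
      reindexLinearEquiv F F
        ((Equiv.prodAssoc l n κ).trans ((Equiv.refl l).prodCongr en))
        ((Equiv.prodAssoc m p κ).trans ((Equiv.refl m).prodCongr ep))
        (blockLeftMulMatrix b (B.map (algebraMap F E) ⊗ₖ A)) := by
  ext ⟨i, i'⟩ ⟨j, j'⟩
  simp [← Algebra.smul_def]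

end Semiring

theorem toMatrix_restrictScalars [CommSemiring F] [CommSemiring E] [Algebra F E] {M N : Type*}
    [AddCommMonoid M] [Module F M] [Module E M] [IsScalarTower F E M]
    [AddCommMonoid N] [Module F N] [Module E N] [IsScalarTower F E N]
    [Finite m] [Fintype n] [DecidableEq n]
    (b : Module.Basis κ F E) (c : Module.Basis n E M) (c' : Module.Basis m E N)
    (f : M →ₗ[E] N) :
    (f.restrictScalars F).toMatrix (b.smulTower' c) (b.smulTower' c') =
      blockLeftMulMatrix b (f.toMatrix c c') := by
  ext
  simp [LinearMap.toMatrix_apply, Algebra.leftMulMatrix_apply, Module.Basis.smulTower'_repr,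
    Module.Basis.smulTower'_apply, mul_comm]

section PrincipalIdealDomain

variable [CommRing F] [CommRing E] [IsDomain E] [IsPrincipalIdealRing E] [Algebra F E]
  (b : Module.Basis κ F E)

theorem rank_blockLeftMulMatrix [Finite m] [Fintype n] (A : Matrix m n E) :
    (blockLeftMulMatrix b A).rank = A.rank * Fintype.card κ := by
  classical
  have : Nontrivial F := (algebraMap F E).domain_nontrivial
  have : Module.Free F E := .of_basis b
  let c := Pi.basisFun E n
  let c' := Pi.basisFun E m
  let f := toLin c c' A
  have toLin_block : toLin (b.smulTower' c) (b.smulTower' c') (blockLeftMulMatrix b A) =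
      f.restrictScalars F := by
    rw [← LinearMap.toMatrix_toLin c c' A, ← toMatrix_restrictScalars, toLin_toMatrix]
  calc (blockLeftMulMatrix b A).rank
      = Module.finrank F (LinearMap.range (f.restrictScalars F)) := by
        rw [rank_eq_finrank_range_toLin _ (b.smulTower' c') (b.smulTower' c), toLin_block]
    _ = Module.finrank F E * Module.finrank E (LinearMap.range f) :=
        (Module.finrank_mul_finrank F E (LinearMap.range f)).symm
    _ = A.rank * Fintype.card κ := by
        rw [← rank_eq_finrank_range_toLin, Module.finrank_eq_card_basis b, mul_comm]

theorem stmt18_general {ι n' p' : Type*} [Finite l] [Finite n] [Fintype m] [Fintype p] [Fintype p']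
    (en : n × κ ≃ n') (ep : p × κ ≃ p') (s : Finset ι) (B : ι → Matrix l m F)
    (T : ι → Matrix n p E) :
    (∑ i ∈ s, B i ⊗ₖ reindex en ep (blockLeftMulMatrix b (T i))).rank =
      (∑ i ∈ s, (B i).map (algebraMap F E) ⊗ₖ T i).rank * Fintype.card κ := by
  simp_rw [kronecker_reindex_blockLeftMulMatrix, ← map_sum, coe_reindexLinearEquiv, rank_reindex,
    rank_blockLeftMulMatrix]

end PrincipalIdealDomain

end BlockLeftMulMatrix

/-- Restriction of scalars for blow-up ranks: if `E/F` has degree `e` and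
`Σᵢ Bᵢ ⊗ Tᵢ` (with `Bᵢ` over `F`, `Tᵢ` `d×d` over `E`) has rank `t` over `E`, then there
are `de×de` matrices `T′ᵢ` over `F` with `Σᵢ Bᵢ ⊗ T′ᵢ` of rank `t·e` over `F`. -/
theorem stmt18 {F E : Type} [Field F] [Field E] [Algebra F E]
    (e : ℕ) (he : Module.finrank F E = e)
    {n m d : ℕ} (hd : 0 < d)
    (B : Fin m → Matrix (Fin n) (Fin n) F)
    (T : Fin m → Matrix (Fin d) (Fin d) E)
    (t : ℕ)
    (h : (∑ i, (B i).map (algebraMap F E) ⊗ₖ T i).rank = t) :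
    ∃ T' : Fin m → Matrix (Fin (d * e)) (Fin (d * e)) F,
      (∑ i, B i ⊗ₖ T' i).rank = t * e := by
  -- `e = 0` is the infinite extension, where `finrank` takes its junk value.
  obtain rfl | he_pos := e.eq_zero_or_pos
  · exact ⟨0, by simp⟩
  have : Module.Finite F E := Module.finite_of_finrank_pos (he ▸ he_pos)
  let b := Module.finBasisOfFinrankEq F E he
  use fun i ↦ reindex finProdFinEquiv finProdFinEquiv (blockLeftMulMatrix b (T i))
  rw [stmt18_general, h, Fintype.card_fin]
end
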